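/- Let P be a proper real-rational n×n transfer matrix that is negative imaginary (NI) with no poles at the origin, and let C be strictly negative imaginary (SNI). Then the positive feedback interconnection [P,C] is stable if and only if: (a) I − P(∞)C(∞) is nonsingular; (b) the largest eigenvalue of (P(0)C(∞) − I)(I − P(∞)C(∞))^{-1} is negative; and (c) the largest eigenvalue of (C(0)P(0) − I)(I − C(∞)P(0))^{-1} is negative. -/

import Mathlib

open Matrix Polynomial Filter Topology
open scoped ComplexOrder

noncomputable section

namespace NIControl

/-- Evaluate a real-rational function at a complex point (junk value at poles). -/
def evalC (f : RatFunc ℝ) (s : ℂ) : ℂ :=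
  f.eval (algebraMap ℝ ℂ) s

/-- `s` is a pole of the real-rational function `f`
(the reduced denominator vanishes at `s`). -/
def IsPoleAt (f : RatFunc ℝ) (s : ℂ) : Prop :=
  f.denom.eval₂ (algebraMap ℝ ℂ) s = 0

variable {n : ℕ}

/-- Pointwise evaluation of a real-rational transfer matrix at a complex point. -/
def evalM (G : Matrix (Fin n) (Fin n) (RatFunc ℝ)) (s : ℂ) : Matrix (Fin n) (Fin n) ℂ :=
  Matrix.of fun i j => evalC (G i j) s

/-- Pointwise evaluation of a real-rational transfer matrix at a real point. -/
def evalR (G : Matrix (Fin n) (Fin n) (RatFunc ℝ)) (x : ℝ) : Matrix (Fin n) (Fin n) ℝ :=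
  Matrix.of fun i j => (G i j).eval (RingHom.id ℝ) x

/-- Value at `s = ∞` of a proper real-rational function. -/
def atInfinity (f : RatFunc ℝ) : ℝ :=
  if f.num.degree = f.denom.degree then f.num.leadingCoeff / f.denom.leadingCoeff else 0

/-- The instantaneous gain `G(∞)` of a proper real-rational transfer matrix. -/
def evalInf (G : Matrix (Fin n) (Fin n) (RatFunc ℝ)) : Matrix (Fin n) (Fin n) ℝ :=
  Matrix.of fun i j => atInfinity (G i j)

/-- The matrix `G` has a pole at `s`. -/
def HasPole (G : Matrix (Fin n) (Fin n) (RatFunc ℝ)) (s : ℂ) : Prop :=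
  ∃ i j, IsPoleAt (G i j) s

/-- All entries of `G` are proper rational functions. -/
def Proper (G : Matrix (Fin n) (Fin n) (RatFunc ℝ)) : Prop :=
  ∀ i j, (G i j).num.degree ≤ (G i j).denom.degree

/-- All entries of `G` are strictly proper rational functions. -/
def StrictlyProper (G : Matrix (Fin n) (Fin n) (RatFunc ℝ)) : Prop :=
  ∀ i j, (G i j).num.degree < (G i j).denom.degree

/-- The pole of `G` at the origin (if any) is at most simple. -/
def NoDoubleOriginPole (G : Matrix (Fin n) (Fin n) (RatFunc ℝ)) : Prop :=
  ∀ i j, (G i j).denom.rootMultiplicity 0 ≤ 1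

/-- Membership in `RH∞`: proper and no poles in the closed right-half complex plane. -/
def MemRHinf {m : Type*} [Fintype m] (G : Matrix m m (RatFunc ℝ)) : Prop :=
  (∀ i j, (G i j).num.degree ≤ (G i j).denom.degree) ∧
  ∀ s : ℂ, 0 ≤ s.re → ∀ i j, ¬ IsPoleAt (G i j) s

/-- The point `jω` on the imaginary axis. -/
def jw (ω : ℝ) : ℂ := Complex.I * (ω : ℂ)

/-- The negative-imaginary frequency kernel `j (M − M*)`. -/
def niKer (M : Matrix (Fin n) (Fin n) ℂ) : Matrix (Fin n) (Fin n) ℂ :=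
  Complex.I • (M - Mᴴ)

/-- Negative imaginary (NI) real-rational transfer matrix. -/
def IsNI (G : Matrix (Fin n) (Fin n) (RatFunc ℝ)) : Prop :=
  Proper G ∧
  (∀ s : ℂ, 0 < s.re → ¬ HasPole G s) ∧
  (∀ ω : ℝ, 0 < ω → ¬ HasPole G (jw ω) → (niKer (evalM G (jw ω))).PosSemidef) ∧
  (∀ ω : ℝ, 0 < ω → HasPole G (jw ω) →
    ∃ R : Matrix (Fin n) (Fin n) ℂ, R.PosSemidef ∧
      Tendsto (fun s : ℂ => (s - jw ω) • Complex.I • evalM G s) (𝓝[≠] jw ω) (𝓝 R)) ∧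
  (HasPole G 0 →
    (∀ k : ℕ, 3 ≤ k → Tendsto (fun s : ℂ => s ^ k • evalM G s) (𝓝[≠] 0) (𝓝 0)) ∧
    ∃ R : Matrix (Fin n) (Fin n) ℂ, R.PosSemidef ∧
      Tendsto (fun s : ℂ => s ^ 2 • evalM G s) (𝓝[≠] 0) (𝓝 R))

/-- Strictly negative imaginary (SNI) real-rational transfer matrix. -/
def IsSNI (G : Matrix (Fin n) (Fin n) (RatFunc ℝ)) : Prop :=
  MemRHinf G ∧ ∀ ω : ℝ, 0 < ω → (niKer (evalM G (jw ω))).PosDef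

/-- Positive real (passive) real-rational transfer matrix. -/
def IsPositiveReal (G : Matrix (Fin n) (Fin n) (RatFunc ℝ)) : Prop :=
  MemRHinf G ∧ ∀ ω : ℝ, 0 ≤ ω → (evalM G (jw ω) + (evalM G (jw ω))ᴴ).PosSemidef

/-- Output strictly passive real-rational transfer matrix. -/
def IsOSP (G : Matrix (Fin n) (Fin n) (RatFunc ℝ)) : Prop :=
  MemRHinf G ∧ ∃ ε : ℝ, 0 < ε ∧ ∀ ω : ℝ, 0 ≤ ω →
    (evalM G (jw ω) + (evalM G (jw ω))ᴴ -
      (ε : ℂ) • ((evalM G (jw ω))ᴴ * evalM G (jw ω))).PosSemidef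

/-- Stability of the positive feedback interconnection `[P, C]`:
`[I; C] (I − P C)⁻¹ [I, P] ∈ RH∞`. -/
def FeedbackStable (P C : Matrix (Fin n) (Fin n) (RatFunc ℝ)) : Prop :=
  ((1 : Matrix (Fin n) (Fin n) (RatFunc ℝ)) - P * C).det ≠ 0 ∧
  MemRHinf (Matrix.fromBlocks
    (1 - P * C)⁻¹ ((1 - P * C)⁻¹ * P)
    (C * (1 - P * C)⁻¹) (C * (1 - P * C)⁻¹ * P))

/-- All eigenvalues of the complex matrix `M` are real and less than `c`. -/
def eigsRealAndLT (M : Matrix (Fin n) (Fin n) ℂ) (c : ℝ) : Prop :=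
  ∀ μ ∈ spectrum ℂ M, μ.im = 0 ∧ μ.re < c

/-- The (real) eigenvalues of the real matrix `M` are all real and its largest
eigenvalue is less than `c`. -/
def maxEigLT (M : Matrix (Fin n) (Fin n) ℝ) (c : ℝ) : Prop :=
  eigsRealAndLT (M.map (Complex.ofReal)) c

/-- Loewner order `A ≤ B` on real matrices. -/
def LoewnerLE (A B : Matrix (Fin n) (Fin n) ℝ) : Prop := (B - A).PosSemidef

/-- Strict Loewner order `A < B` on real matrices. -/
def LoewnerLT (A B : Matrix (Fin n) (Fin n) ℝ) : Prop := (B - A).PosDef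

/-- Open right half plane. -/
def RHP : Set ℂ := {s | 0 < s.re}

lemma isOpen_RHP : IsOpen RHP := isOpen_lt continuous_const Complex.continuous_re

lemma isPreconnected_RHP : IsPreconnected RHP :=
  (convex_halfSpace_re_gt 0).isPreconnected

lemma jw_re (ω : ℝ) : (jw ω).re = 0 := by simp [jw]
lemma jw_im (ω : ℝ) : (jw ω).im = ω := by simp [jw]

lemma eq_jw {s : ℂ} (h : s.re = 0) : s = jw s.im := by
  apply Complex.ext <;> simp [jw, h]

lemma neBot_punct {s₀ : ℂ} (h : 0 ≤ s₀.re) : (𝓝[RHP \ {s₀}] s₀).NeBot := by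
  have ht : Tendsto (fun x : ℝ => s₀ + (x : ℂ)) (𝓝[>] 0) (𝓝[RHP \ {s₀}] s₀) := by
    apply tendsto_nhdsWithin_of_tendsto_nhds_of_eventually_within
    · have : ContinuousAt (fun x : ℝ => s₀ + (x : ℂ)) 0 := by fun_prop
      have h2 := this.tendsto
      simp only [Complex.ofReal_zero, add_zero] at h2
      exact h2.mono_left nhdsWithin_le_nhds
    · filter_upwards [self_mem_nhdsWithin] with x hx
      have hx' : 0 < x := hx
      refine ⟨?_, ?_⟩
      · show 0 < (s₀ + (x : ℂ)).re
        simp; linarith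
      · simp [hx'.ne']
  exact ht.neBot

lemma neBot_RHP {s₀ : ℂ} (h : 0 ≤ s₀.re) : (𝓝[RHP] s₀).NeBot :=
  (neBot_punct h).mono (nhdsWithin_mono _ Set.sdiff_subset)

/-- A closed subset of RHP bounded away from the boundary is compact. -/
lemma isCompact_of_boundary {T : Type*} [TopologicalSpace T] [T2Space T] {K : Set T}
    (hK : IsCompact K) (Z : Set (T × ℂ))
    (hZK : ∀ p ∈ Z, p.1 ∈ K ∧ p.2 ∈ RHP)
    (hcl : ∀ p, p ∈ closure Z → p.1 ∈ K → p.2 ∈ RHP → p ∈ Z)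
    (hax : ∀ ω : ℝ, ∀ᶠ s in 𝓝[RHP] (jw ω), ∀ τ ∈ K, (τ, s) ∉ Z)
    (hinf : ∀ᶠ s in Bornology.cobounded ℂ, s ∈ RHP → ∀ τ ∈ K, (τ, s) ∉ Z) :
    IsCompact Z := by
  have hb : ∃ R : ℝ, ∀ p ∈ Z, p.2 ∈ Metric.closedBall (0 : ℂ) R := by
    have := hinf
    rw [← comap_norm_atTop, eventually_comap] at this
    obtain ⟨R, hR⟩ := eventually_atTop.1 this
    refine ⟨R, fun p hp => ?_⟩
    by_contra hn
    have h1 : R ≤ ‖p.2‖ := by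
      simp at hn; exact hn.le
    exact hR _ h1 p.2 rfl (hZK p hp).2 p.1 (hZK p hp).1 hp
  obtain ⟨R, hR⟩ := hb
  have hsub : Z ⊆ K ×ˢ Metric.closedBall (0 : ℂ) R := fun p hp => ⟨(hZK p hp).1, hR p hp⟩
  have hcomp : IsCompact (K ×ˢ Metric.closedBall (0 : ℂ) R) := hK.prod (isCompact_closedBall _ _)
  refine hcomp.of_isClosed_subset ?_ hsub
  rw [← closure_subset_iff_isClosed]
  intro p hp
  have hpK : p ∈ K ×ˢ Metric.closedBall (0 : ℂ) R :=
    closure_minimal hsub hcomp.isClosed hp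
  apply hcl p hp hpK.1
  have hre : 0 ≤ p.2.re := by
    have h1 : Z ⊆ {q : T × ℂ | 0 ≤ q.2.re} := fun q hq => (le_of_lt (hZK q hq).2 : 0 ≤ q.2.re)
    have h2 : IsClosed {q : T × ℂ | 0 ≤ q.2.re} :=
      isClosed_le continuous_const (Complex.continuous_re.comp continuous_snd)
    exact closure_minimal h1 h2 hp
  rcases hre.lt_or_eq with h | h
  · exact h
  exfalso
  have hj := eq_jw h.symm
  have h3 := hax p.2.im
  rw [← hj, eventually_nhdsWithin_iff] at h3
  have h4 : ∀ᶠ q in 𝓝 p, q.2 ∈ RHP → ∀ τ ∈ K, (τ, q.2) ∉ Z :=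
    (continuous_snd.tendsto p).eventually h3
  rw [mem_closure_iff_frequently] at hp
  obtain ⟨q, hq, hq2⟩ := (hp.and_eventually h4).exists
  exact hq2 (hZK q hq).2 q.1 (hZK q hq).1 hq

/-- Minimum principle on the right half plane. -/
lemma min_principle (h : ℂ → ℂ) (hd : DifferentiableOn ℂ h RHP)
    (hax : ∀ ω : ℝ, ∀ ε > 0, ∀ᶠ s in 𝓝[RHP] (jw ω), -ε < (h s).re)
    (hinf : ∀ ε > 0, ∀ᶠ s in Bornology.cobounded ℂ, s ∈ RHP → -ε < (h s).re) :
    ∀ s ∈ RHP, 0 ≤ (h s).re := by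
  intro s1 hs1
  by_contra hneg
  push Not at hneg
  set δ := -(h s1).re with hδ
  have hδ0 : 0 < δ := by linarith
  let Z : Set (Unit × ℂ) := {p | p.2 ∈ RHP ∧ (h p.2).re ≤ -δ}
  have hcontRe : ContinuousOn (fun s => (h s).re) RHP :=
    Complex.continuous_re.comp_continuousOn hd.continuousOn
  have hZ : IsCompact Z := by
    refine isCompact_of_boundary (K := Set.univ) isCompact_univ Z (fun p hp => ⟨trivial, hp.1⟩)
      ?_ ?_ ?_
    · intro p hp _ hpR
      refine ⟨hpR, ?_⟩
      have hc : ContinuousAt (fun q : Unit × ℂ => (h q.2).re) p := by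
        have : ContinuousAt (fun s => (h s).re) p.2 :=
          hcontRe.continuousAt (isOpen_RHP.mem_nhds hpR)
        exact this.comp continuous_snd.continuousAt
      rw [mem_closure_iff_frequently] at hp
      by_contra hlt
      push Not at hlt
      have := hc.eventually (lt_mem_nhds hlt)
      obtain ⟨q, hq, hq2⟩ := (hp.and_eventually this).exists
      exact absurd hq.2 (not_le.2 hq2)
    · intro ω
      filter_upwards [hax ω δ hδ0] with s hs τ _ hm
      exact absurd hm.2 (not_le.2 hs)
    · filter_upwards [hinf δ hδ0] with s hs hsR τ _ hm
      exact absurd hm.2 (not_le.2 (hs hsR))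
  have hne : Z.Nonempty := ⟨((), s1), hs1, by simp [hδ]⟩
  obtain ⟨p, hpZ, hpmin⟩ := hZ.exists_isMinOn (f := fun q : Unit × ℂ => (h q.2).re) hne
    (hcontRe.comp continuous_snd.continuousOn (fun q hq => hq.1))
  have hglob : ∀ s ∈ RHP, (h p.2).re ≤ (h s).re := by
    intro s hs
    by_cases hle : (h s).re ≤ -δ
    · exact hpmin (show ((), s) ∈ Z from ⟨hs, hle⟩)
    · push Not at hle
      exact hpZ.2.trans hle.le
  have hmax : IsMaxOn (norm ∘ fun s => Complex.exp (-(h s))) RHP p.2 := by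
    intro s hs
    simp only [Set.mem_ofPred_eq, Function.comp, Complex.norm_exp, Complex.neg_re]
    exact Real.exp_le_exp.2 (neg_le_neg (hglob s hs))
  have hconst := Complex.norm_eqOn_of_isPreconnected_of_isMaxOn isPreconnected_RHP isOpen_RHP
    (f := fun s => Complex.exp (-(h s))) (c := p.2) (hd.neg.cexp) hpZ.1 hmax
  have hall : ∀ s ∈ RHP, (h s).re = (h p.2).re := by
    intro s hs
    have := hconst hs
    simp only [Function.comp, Function.const, Complex.norm_exp, Complex.neg_re] at this
    have := Real.exp_injective this
    linarith
  have := neBot_RHP (s₀ := jw 0) (by simp [jw])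
  have h5 := hax 0 δ hδ0
  obtain ⟨s, hs, hs2⟩ := (h5.and self_mem_nhdsWithin).exists
  have := hall s hs2
  have := hpZ.2
  linarith

/-- Homotopy principle: zeros in the open right half plane cannot appear along a homotopy
unless they cross the boundary. -/
lemma homotopy_principle (f : ℝ → ℂ → ℂ)
    (hcont : ContinuousOn (fun p : ℝ × ℂ => f p.1 p.2) (Set.Icc 0 1 ×ˢ RHP))
    (hd : ∀ τ ∈ Set.Icc (0:ℝ) 1, DifferentiableOn ℂ (f τ) RHP)
    (hax : ∀ ω : ℝ, ∀ᶠ s in 𝓝[RHP] (jw ω), ∀ τ ∈ Set.Icc (0:ℝ) 1, f τ s ≠ 0)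
    (hinf : ∀ᶠ s in Bornology.cobounded ℂ, s ∈ RHP → ∀ τ ∈ Set.Icc (0:ℝ) 1, f τ s ≠ 0)
    (h0 : ∀ s ∈ RHP, f 0 s ≠ 0) :
    ∀ τ ∈ Set.Icc (0:ℝ) 1, ∀ s ∈ RHP, f τ s ≠ 0 := by
  by_contra hcon
  push Not at hcon
  obtain ⟨τ1, hτ1, s1, hs1, hf1⟩ := hcon
  let Z : Set (ℝ × ℂ) := {p | p.1 ∈ Set.Icc (0:ℝ) 1 ∧ p.2 ∈ RHP ∧ f p.1 p.2 = 0}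
  have hZ : IsCompact Z := by
    refine isCompact_of_boundary (K := Set.Icc (0:ℝ) 1) isCompact_Icc Z
      (fun p hp => ⟨hp.1, hp.2.1⟩) ?_ ?_ ?_
    · intro p hp hpK hpR
      refine ⟨hpK, hpR, ?_⟩
      by_contra hne
      have hc := (hcont p ⟨hpK, hpR⟩).eventually (isOpen_ne.mem_nhds hne)
      rw [eventually_nhdsWithin_iff] at hc
      rw [mem_closure_iff_frequently] at hp
      obtain ⟨q, hq, hq2⟩ := (hp.and_eventually hc).exists
      exact hq2 ⟨hq.1, hq.2.1⟩ hq.2.2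
    · intro ω
      filter_upwards [hax ω] with s hs τ hτ hm
      exact hs τ hτ hm.2.2
    · filter_upwards [hinf] with s hs hsR τ hτ hm
      exact hs hsR τ hτ hm.2.2
  obtain ⟨p, hpZ, hpmin⟩ := hZ.exists_isMinOn (f := fun q : ℝ × ℂ => q.1)
    ⟨(τ1, s1), hτ1, hs1, hf1⟩ continuous_fst.continuousOn
  obtain ⟨τ, s⟩ := p
  obtain ⟨hτ, hs, hfs⟩ := hpZ
  simp only at hτ hs hfs
  have hτ0 : 0 < τ := by
    rcases hτ.1.lt_or_eq with h | h
    · exact h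
    · subst h; exact absurd hfs (h0 s hs)
  have hbelow : ∀ σ, 0 ≤ σ → σ < τ → ∀ z ∈ RHP, f σ z ≠ 0 := by
    intro σ h1 h2 z hz hfz
    have : τ ≤ σ := hpmin (show (σ, z) ∈ Z from ⟨⟨h1, by linarith [hτ.2]⟩, hz, hfz⟩)
    linarith
  have hana : AnalyticOnNhd ℂ (f τ) RHP := (hd τ hτ).analyticOnNhd isOpen_RHP
  have hiso : ∀ᶠ z in 𝓝[≠] s, f τ z ≠ 0 := by
    rcases (hana s hs).eventually_eq_zero_or_eventually_ne_zero with h | h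
    · exfalso
      have hz := hana.eqOn_zero_of_preconnected_of_eventuallyEq_zero isPreconnected_RHP hs h
      have := neBot_RHP (s₀ := jw 0) (by simp [jw])
      obtain ⟨z, hz1, hz2⟩ := ((hax 0).and self_mem_nhdsWithin).exists
      exact hz1 τ hτ (hz hz2)
    · exact h
  obtain ⟨r, hr0, hrR, hrne⟩ : ∃ r > 0, Metric.closedBall s r ⊆ RHP ∧
      ∀ z ∈ Metric.closedBall s r, z ≠ s → f τ z ≠ 0 := by
    rw [eventually_nhdsWithin_iff] at hiso
    have := hiso.and (isOpen_RHP.mem_nhds hs)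
    obtain ⟨r, hr, h⟩ := Metric.nhds_basis_closedBall.eventually_iff.1 this
    exact ⟨r, hr, fun z hz => (h hz).2, fun z hz hne => (h hz).1 hne⟩
  have hsphne : (Metric.sphere s r).Nonempty := NormedSpace.sphere_nonempty.2 hr0.le
  have hsphsub : Metric.sphere s r ⊆ RHP := Metric.sphere_subset_closedBall.trans hrR
  obtain ⟨z0, hz0, hz0min⟩ := (isCompact_sphere s r).exists_isMinOn (f := fun z => ‖f τ z‖) hsphne
    ((hd τ hτ).continuousOn.norm.mono hsphsub)
  set m := ‖f τ z0‖ with hm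
  have hm0 : 0 < m := norm_pos_iff.2 (hrne z0 (Metric.sphere_subset_closedBall hz0)
    (by rintro rfl; simp at hz0; exact hr0.ne hz0))
  have key : ∀ z ∈ RHP, ∀ ε > 0, ∀ᶠ q in 𝓝 (τ, z), q.1 ∈ Set.Icc (0:ℝ) 1 → q.2 ∈ RHP →
      ‖f q.1 q.2 - f τ z‖ < ε := by
    intro z hz ε hε
    have hc := (hcont (τ, z) ⟨hτ, hz⟩)
    have := (Metric.tendsto_nhds.1 hc ε hε)
    rw [eventually_nhdsWithin_iff] at this
    filter_upwards [this] with q hq h1 h2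
    simpa [dist_eq_norm] using hq ⟨h1, h2⟩
  have hev1 : ∀ᶠ σ in 𝓝 τ, ∀ z ∈ Metric.sphere s r, σ ∈ Set.Icc (0:ℝ) 1 → m / 2 < ‖f σ z‖ := by
    apply (isCompact_sphere s r).eventually_forall_of_forall_eventually
    intro z hz
    have hzm : m ≤ ‖f τ z‖ := hz0min hz
    filter_upwards [key z (hsphsub hz) (m/2) (by linarith),
      continuous_snd.continuousAt.eventually (isOpen_RHP.mem_nhds (hsphsub hz))] with q hq hqR hq1
    have h1 := hq hq1 hqR
    have h2 := norm_sub_norm_le (f τ z) (f q.1 q.2)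
    rw [norm_sub_rev] at h2
    linarith
  have hev2 : ∀ᶠ σ in 𝓝 τ, σ ∈ Set.Icc (0:ℝ) 1 → ‖f σ s‖ < m / 2 := by
    have h1 := key s hs (m/2) (by linarith)
    have hct : ContinuousAt (fun σ : ℝ => (σ, s)) τ := by fun_prop
    filter_upwards [hct.eventually h1] with σ hσ hσ1
    have := hσ hσ1 hs
    simpa [hfs] using this
  have hev3 : ∀ᶠ σ in 𝓝[<] τ, 0 ≤ σ ∧ σ < τ := by
    filter_upwards [self_mem_nhdsWithin, nhdsWithin_le_nhds (lt_mem_nhds hτ0)] with σ h1 h2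
    exact ⟨h2.le, h1⟩
  obtain ⟨σ, ⟨h1, h2⟩, h3, h4⟩ := (hev3.and ((hev1.filter_mono nhdsWithin_le_nhds).and
    (hev2.filter_mono nhdsWithin_le_nhds))).exists
  have hσ : σ ∈ Set.Icc (0:ℝ) 1 := ⟨h1, by linarith [hτ.2]⟩
  have hnz := hbelow σ h1 h2
  have hdiff : DiffContOnCl ℂ (fun z => (f σ z)⁻¹) (Metric.ball s r) := by
    apply DifferentiableOn.diffContOnCl
    rw [closure_ball s hr0.ne']
    exact ((hd σ hσ).mono hrR).inv (fun z hz => hnz z (hrR hz))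
  have := Complex.norm_le_of_forall_mem_frontier_norm_le Metric.isBounded_ball hdiff
    (C := (m/2)⁻¹) (by
      intro z hz
      rw [frontier_ball s hr0.ne'] at hz
      rw [norm_inv]
      exact inv_anti₀ (by linarith) (h3 z hz hσ).le) (z := s)
      (subset_closure (Metric.mem_ball_self hr0))
  rw [norm_inv, inv_le_inv₀ (norm_pos_iff.2 (hnz s hs)) (by linarith)] at this
  linarith [h4 hσ]

section forms
variable {m : Type*} [Fintype m]

/-- Quadratic form of a complex matrix. -/
def qf (M : Matrix m m ℂ) (x : m → ℂ) : ℂ := star x ⬝ᵥ M *ᵥ x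

/-- Entrywise `l1` size of a matrix. -/
def nrm (M : Matrix m m ℂ) : ℝ := ∑ i, ∑ j, ‖M i j‖

/-- Nonpositive imaginary part. -/
def NIm (M : Matrix m m ℂ) : Prop := ∀ x, (qf M x).im ≤ 0

lemma qf_add (M N : Matrix m m ℂ) (x) : qf (M + N) x = qf M x + qf N x := by
  simp [qf, add_mulVec, dotProduct_add]

lemma qf_sub (M N : Matrix m m ℂ) (x) : qf (M - N) x = qf M x - qf N x := by
  simp [qf, sub_mulVec, dotProduct_sub]

lemma qf_smul (c : ℂ) (M : Matrix m m ℂ) (x) : qf (c • M) x = c * qf M x := by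
  simp [qf, smul_mulVec]

lemma qf_eq_sum (M : Matrix m m ℂ) (x) :
    qf M x = ∑ i, ∑ j, (starRingEnd ℂ) (x i) * M i j * x j := by
  simp only [qf, dotProduct, mulVec, Finset.mul_sum, Pi.star_apply, mul_assoc]
  rfl

lemma qf_conjTranspose (M : Matrix m m ℂ) (x) : qf Mᴴ x = (starRingEnd ℂ) (qf M x) := by
  rw [qf_eq_sum, qf_eq_sum, Finset.sum_comm]
  simp only [map_sum, map_mul, Complex.conj_conj, conjTranspose_apply]
  refine Finset.sum_congr rfl fun i _ => Finset.sum_congr rfl fun j _ => ?_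
  simp only [RCLike.star_def]
  ring

lemma qf_conj (M : Matrix m m ℂ) (x) :
    qf (M.map (starRingEnd ℂ)) (star x) = (starRingEnd ℂ) (qf M x) := by
  rw [qf_eq_sum, qf_eq_sum]
  simp [map_sum, map_mul]

lemma nrm_nonneg (M : Matrix m m ℂ) : 0 ≤ nrm M := by unfold nrm; positivity

lemma continuous_nrm : Continuous (nrm : Matrix m m ℂ → ℝ) := by
  unfold nrm
  refine continuous_finsetSum _ fun i _ => continuous_finsetSum _ fun j _ => ?_
  exact (continuous_id.matrix_elem i j).norm

lemma continuous_qf (x : m → ℂ) : Continuous (fun M : Matrix m m ℂ => qf M x) := by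
  simp only [qf_eq_sum]
  refine continuous_finsetSum _ fun i _ => continuous_finsetSum _ fun j _ => ?_
  exact (continuous_const.mul (continuous_id.matrix_elem i j)).mul continuous_const

lemma continuous_qf_right (M : Matrix m m ℂ) : Continuous (fun x : m → ℂ => qf M x) := by
  simp only [qf_eq_sum]
  refine continuous_finsetSum _ fun i _ => continuous_finsetSum _ fun j _ => ?_
  have h1 : Continuous (fun x : m → ℂ => (starRingEnd ℂ) (x i)) :=
    Complex.continuous_conj.comp (continuous_apply i)
  exact (h1.mul continuous_const).mul (continuous_apply j)

lemma norm_qf_le (M : Matrix m m ℂ) (x : m → ℂ) : ‖qf M x‖ ≤ nrm M * ‖x‖ ^ 2 := by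
  rw [qf_eq_sum, nrm, Finset.sum_mul]
  refine (norm_sum_le _ _).trans (Finset.sum_le_sum fun i _ => ?_)
  rw [Finset.sum_mul]
  refine (norm_sum_le _ _).trans (Finset.sum_le_sum fun j _ => ?_)
  rw [norm_mul, norm_mul, RCLike.norm_conj]
  have h1 := norm_le_pi_norm x i
  have h2 := norm_le_pi_norm x j
  calc ‖x i‖ * ‖M i j‖ * ‖x j‖ ≤ ‖x‖ * ‖M i j‖ * ‖x‖ := by gcongr
    _ = _ := by ring

lemma norm_mulVec_le (M : Matrix m m ℂ) (x : m → ℂ) : ‖M *ᵥ x‖ ≤ nrm M * ‖x‖ := by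
  rw [pi_norm_le_iff_of_nonneg (mul_nonneg (nrm_nonneg M) (norm_nonneg _))]
  intro i
  simp only [mulVec, dotProduct]
  calc ‖∑ j, M i j * x j‖ ≤ ∑ j, ‖M i j‖ * ‖x‖ := by
        refine (norm_sum_le _ _).trans (Finset.sum_le_sum fun j _ => ?_)
        rw [norm_mul]
        gcongr
        exact norm_le_pi_norm x j
    _ = (∑ j, ‖M i j‖) * ‖x‖ := by rw [Finset.sum_mul]
    _ ≤ nrm M * ‖x‖ := by
        gcongr
        unfold nrm
        exact Finset.single_le_sum (f := fun i => ∑ j, ‖M i j‖)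
          (fun i _ => Finset.sum_nonneg fun j _ => norm_nonneg _) (Finset.mem_univ i)

lemma norm_dot_le (x y : m → ℂ) : ‖star x ⬝ᵥ y‖ ≤ Fintype.card m * (‖x‖ * ‖y‖) := by
  simp only [dotProduct]
  calc ‖∑ i, star x i * y i‖ ≤ ∑ i : m, ‖x‖ * ‖y‖ := by
        refine (norm_sum_le _ _).trans (Finset.sum_le_sum fun j _ => ?_)
        rw [norm_mul, Pi.star_apply, norm_star]
        gcongr
        · exact norm_le_pi_norm x j
        · exact norm_le_pi_norm y j
    _ = _ := by simp

lemma NIm.of_tendsto {ι : Type*} {l : Filter ι} [l.NeBot] {F : ι → Matrix m m ℂ}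
    {M : Matrix m m ℂ} (h : Tendsto F l (𝓝 M)) (hF : ∀ᶠ i in l, NIm (F i)) : NIm M := by
  intro x
  have h1 : Tendsto (fun i => (qf (F i) x).im) l (𝓝 (qf M x).im) :=
    (Complex.continuous_im.tendsto _).comp (((continuous_qf x).tendsto M).comp h)
  exact le_of_tendsto h1 (hF.mono fun i hi => hi x)

/-- Perturbation of lower bounds on forms. -/
lemma eventually_form {ι : Type*} {l : Filter ι} {F : ι → Matrix m m ℂ}
    {M : Matrix m m ℂ} (h : Tendsto F l (𝓝 M)) {c : ℝ}
    (hc : ∀ x, c * ‖x‖ ^ 2 ≤ -(qf M x).im) {ε : ℝ} (hε : 0 < ε) :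
    ∀ᶠ i in l, ∀ x, (c - ε) * ‖x‖ ^ 2 ≤ -(qf (F i) x).im := by
  have h1 : Tendsto (fun i => nrm (F i - M)) l (𝓝 0) := by
    have : Tendsto (fun i => F i - M) l (𝓝 (M - M)) := h.sub tendsto_const_nhds
    have h2 := (continuous_nrm.tendsto _).comp this
    simpa [nrm, Function.comp_def] using h2
  filter_upwards [h1.eventually (gt_mem_nhds hε)] with i hi x
  have h3 := norm_qf_le (F i - M) x
  rw [qf_sub] at h3
  have h4 := (Complex.abs_im_le_norm (qf (F i) x - qf M x)).trans h3
  rw [Complex.sub_im, abs_le] at h4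
  have h5 : nrm (F i - M) * ‖x‖ ^ 2 ≤ ε * ‖x‖ ^ 2 := by gcongr
  have := hc x
  nlinarith [h4.1, h4.2]

/-- Strictly negative imaginary part gives a uniform bound. -/
lemma exists_form_bound (M : Matrix m m ℂ) (h : ∀ x, x ≠ 0 → (qf M x).im < 0) :
    ∃ c > 0, ∀ x, c * ‖x‖ ^ 2 ≤ -(qf M x).im := by
  rcases isEmpty_or_nonempty m with hm | hm
  · refine ⟨1, one_pos, fun x => ?_⟩
    have : x = 0 := Subsingleton.elim _ _
    subst this
    simp [qf]
  have hne : (Metric.sphere (0 : m → ℂ) 1).Nonempty := NormedSpace.sphere_nonempty.2 zero_le_one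
  obtain ⟨x0, hx0, hmin⟩ := (isCompact_sphere (0 : m → ℂ) 1).exists_isMinOn
    (f := fun x => -(qf M x).im) hne
    (Complex.continuous_im.comp (continuous_qf_right M)).neg.continuousOn
  have hx0' : x0 ≠ 0 := by
    rintro rfl; simp at hx0
  refine ⟨-(qf M x0).im, by linarith [h x0 hx0'], fun x => ?_⟩
  by_cases hx : x = 0
  · subst hx; simp [qf]
  have hn : 0 < ‖x‖ := norm_pos_iff.2 hx
  let y : m → ℂ := ((‖x‖⁻¹ : ℝ) : ℂ) • x
  have hy : y ∈ Metric.sphere (0 : m → ℂ) 1 := by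
    simp only [mem_sphere_zero_iff_norm, y, norm_smul, Complex.norm_real, norm_inv, norm_norm]
    exact inv_mul_cancel₀ hn.ne'
  have h1 : -(qf M x0).im ≤ -(qf M y).im := hmin hy
  have h2 : qf M y = ((‖x‖⁻¹ ^ 2 : ℝ) : ℂ) * qf M x := by
    simp only [y, qf, mulVec_smul, star_smul, smul_dotProduct, dotProduct_smul, smul_eq_mul]
    simp
    ring
  rw [h2, Complex.im_ofReal_mul] at h1
  have h3 : ‖x‖⁻¹ ^ 2 * ‖x‖ ^ 2 = 1 := by field_simp
  calc -(qf M x0).im * ‖x‖ ^ 2 ≤ -(‖x‖⁻¹ ^ 2 * (qf M x).im) * ‖x‖ ^ 2 := by gcongr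
    _ = -(qf M x).im * (‖x‖⁻¹ ^ 2 * ‖x‖ ^ 2) := by ring
    _ = _ := by rw [h3, mul_one]

lemma isHermitian_of_im_zero [DecidableEq m] (M : Matrix m m ℂ) (h : ∀ x, (qf M x).im = 0) :
    M.IsHermitian := by
  have e1 : ∀ i (a : ℂ) (j) (b : ℂ), qf M (Pi.single i a + Pi.single j b) =
      (starRingEnd ℂ) a * M i i * a + (starRingEnd ℂ) a * M i j * b
      + (starRingEnd ℂ) b * M j i * a + (starRingEnd ℂ) b * M j j * b := by
    intro i a j b
    simp only [qf, mulVec_add, star_add, add_dotProduct, dotProduct_add, ← Pi.single_star,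
      single_dotProduct, mulVec_single]
    simp
    ring
  have hd : ∀ i, (M i i).im = 0 := by
    intro i
    have := h (Pi.single i 1 + Pi.single i 0)
    rw [e1] at this
    simpa using this
  ext i j
  rw [conjTranspose_apply]
  have h1 := h (Pi.single i 1 + Pi.single j 1)
  have h2 := h (Pi.single i 1 + Pi.single j Complex.I)
  rw [e1] at h1 h2
  simp [hd] at h1 h2
  apply Complex.ext
  · simp; linarith
  · simp; linarith

lemma im_zero_of_isHermitian (M : Matrix m m ℂ) (h : M.IsHermitian) (x) : (qf M x).im = 0 := by
  have := qf_conjTranspose M x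
  rw [h.eq] at this
  exact Complex.conj_eq_iff_im.1 this.symm

lemma NIm.im_zero_of_real {M : Matrix m m ℂ} (h : NIm M) (hr : M.map (starRingEnd ℂ) = M) (x) :
    (qf M x).im = 0 := by
  apply le_antisymm (h x)
  have := h (star x)
  have h2 := qf_conj M x
  rw [hr] at h2
  rw [h2, Complex.conj_im] at this
  linarith

lemma PosSemidef.qf_re {M : Matrix m m ℂ} (h : M.PosSemidef) (x) : 0 ≤ (qf M x).re :=
  (Complex.le_def.1 (h.dotProduct_mulVec_nonneg x)).1

lemma posSemidef_of_qf [DecidableEq m] {M : Matrix m m ℂ} (h : M.IsHermitian)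
    (h2 : ∀ x, 0 ≤ (qf M x).re) : M.PosSemidef := by
  refine Matrix.PosSemidef.of_dotProduct_mulVec_nonneg h fun x => ?_
  rw [Complex.le_def]
  exact ⟨h2 x, (im_zero_of_isHermitian M h x).symm⟩

end forms

lemma qf_niKer {n : ℕ} (M : Matrix (Fin n) (Fin n) ℂ) (x) :
    (qf (niKer M) x).re = -2 * (qf M x).im := by
  rw [niKer, qf_smul, qf_sub, qf_conjTranspose]
  simp
  ring

lemma NIm_of_niKer {n : ℕ} {M : Matrix (Fin n) (Fin n) ℂ} (h : (niKer M).PosSemidef) : NIm M := by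
  intro x
  have := PosSemidef.qf_re h x
  rw [qf_niKer] at this
  linarith

lemma SNIm_of_niKer {n : ℕ} {M : Matrix (Fin n) (Fin n) ℂ} (h : (niKer M).PosDef) (x)
    (hx : x ≠ 0) : (qf M x).im < 0 := by
  have := (Complex.lt_def.1 (h.dotProduct_mulVec_pos hx)).1
  change 0 < (qf (niKer M) x).re at this
  rw [qf_niKer] at this
  linarith

section PR
variable {m : Type*} [Fintype m]

/-- Analytic negative imaginary functions. -/
structure NIF (G : ℂ → Matrix m m ℂ) (Ginf : Matrix m m ℂ) : Prop where
  diff : ∀ s ∈ RHP, ∀ i j, DifferentiableAt ℂ (fun s => G s i j) s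
  conj : ∀ s, G ((starRingEnd ℂ) s) = (G s).map (starRingEnd ℂ)
  zero : ∀ i j, DifferentiableAt ℂ (fun s => G s i j) 0
  inf : Tendsto G (Bornology.cobounded ℂ) (𝓝 Ginf)
  axis : ∀ ω : ℝ, 0 < ω → ∃ R K : Matrix m m ℂ, R.PosSemidef ∧ NIm K ∧
    Tendsto (fun s => G s + (Complex.I / (s - jw ω)) • R) (𝓝[≠] (jw ω)) (𝓝 K)
  small : ∀ᶠ ω : ℝ in 𝓝[>] 0, NIm (G (jw ω))
  large : ∀ᶠ ω : ℝ in atTop, NIm (G (jw ω))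

lemma continuous_jw : Continuous jw := by unfold jw; fun_prop

variable {G : ℂ → Matrix m m ℂ} {Ginf : Matrix m m ℂ}

lemma diff_qf (x : m → ℂ) {s : ℂ} (h : ∀ i j, DifferentiableAt ℂ (fun s => G s i j) s) :
    DifferentiableAt ℂ (fun s => qf (G s) x) s := by
  simp only [qf_eq_sum]
  refine DifferentiableAt.fun_sum fun i _ => DifferentiableAt.fun_sum fun j _ => ?_
  exact ((differentiableAt_const _).mul (h i j)).mul (differentiableAt_const _)

lemma tendsto_matrix {ι : Type*} {l : Filter ι} {F : ι → Matrix m m ℂ} {M : Matrix m m ℂ}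
    (h : ∀ i j, Tendsto (fun k => F k i j) l (𝓝 (M i j))) : Tendsto F l (𝓝 M) :=
  tendsto_pi_nhds.2 fun i => tendsto_pi_nhds.2 fun j => h i j

lemma NIF.continuousAt (h : NIF G Ginf) {s : ℂ} (hs : s ∈ RHP ∨ s = 0) : ContinuousAt G s := by
  refine tendsto_matrix fun i j => ?_
  rcases hs with hs | rfl
  · exact (h.diff s hs i j).continuousAt
  · exact (h.zero i j).continuousAt

lemma NIF.zero_im (h : NIF G Ginf) (x) : (qf (G 0) x).im = 0 := by
  apply NIm.im_zero_of_real
  · have hc := h.continuousAt (Or.inr rfl)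
    have h0 : jw 0 = 0 := by simp [jw]
    rw [← h0] at hc
    have h1 : Tendsto (fun ω => G (jw ω)) (𝓝[>] 0) (𝓝 (G (jw 0))) :=
      (hc.tendsto.comp (continuous_jw.tendsto 0)).mono_left nhdsWithin_le_nhds
    rw [h0] at h1
    exact NIm.of_tendsto h1 h.small
  · have := h.conj 0
    simp at this
    exact this.symm

lemma tendsto_jw_cobounded : Tendsto jw atTop (Bornology.cobounded ℂ) := by
  rw [← comap_norm_atTop, tendsto_comap_iff]
  have : (norm ∘ jw) = fun ω => |ω| := by ext ω; simp [jw]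
  rw [this]
  exact tendsto_abs_atTop_atTop

lemma tendsto_conj_cobounded :
    Tendsto (starRingEnd ℂ) (Bornology.cobounded ℂ) (Bornology.cobounded ℂ) := by
  rw [← comap_norm_atTop, tendsto_comap_iff]
  have : (norm ∘ (starRingEnd ℂ)) = fun z : ℂ => ‖z‖ := by ext z; simp
  rw [this]
  exact tendsto_comap

lemma NIF.inf_real (h : NIF G Ginf) : Ginf.map (starRingEnd ℂ) = Ginf := by
  have h1 : Tendsto (fun s => G ((starRingEnd ℂ) s)) (Bornology.cobounded ℂ) (𝓝 Ginf) :=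
    h.inf.comp tendsto_conj_cobounded
  have h2 : Tendsto (fun s => (G s).map (starRingEnd ℂ)) (Bornology.cobounded ℂ)
      (𝓝 (Ginf.map (starRingEnd ℂ))) := by
    have hc : Continuous (fun M : Matrix m m ℂ => M.map (starRingEnd ℂ)) :=
      continuous_id.matrix_map Complex.continuous_conj
    exact (hc.tendsto _).comp h.inf
  simp only [h.conj] at h1
  exact tendsto_nhds_unique h2 h1

lemma NIF.inf_im (h : NIF G Ginf) (x) : (qf Ginf x).im = 0 := by
  apply NIm.im_zero_of_real _ h.inf_real
  exact NIm.of_tendsto (h.inf.comp tendsto_jw_cobounded) h.large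

lemma tendsto_conj_RHP (ω : ℝ) :
    Tendsto (starRingEnd ℂ) (𝓝[RHP] (jw ω)) (𝓝[RHP] (jw (-ω))) := by
  apply tendsto_nhdsWithin_of_tendsto_nhds_of_eventually_within
  · have h := Complex.continuous_conj.tendsto (jw ω)
    have h2 : (starRingEnd ℂ) (jw ω) = jw (-ω) := by simp [jw]
    rw [h2] at h
    exact h.mono_left nhdsWithin_le_nhds
  · filter_upwards [self_mem_nhdsWithin] with s hs
    simpa [RHP] using hs

lemma RHP_nhds_le (ω : ℝ) : 𝓝[RHP] (jw ω) ≤ 𝓝[≠] (jw ω) := by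
  apply nhdsWithin_mono
  intro s hs h
  have h1 : s = jw ω := h
  have h2 : 0 < s.re := hs
  rw [h1, jw_re] at h2
  exact lt_irrefl _ h2

/-- Positive realness of `(G(0) - G(s))/s`. -/
lemma NIF.pr (h : NIF G Ginf) (x : m → ℂ) :
    ∀ s ∈ RHP, 0 ≤ ((qf (G 0) x - qf (G s) x) / s).re := by
  have hpos : ∀ (x : m → ℂ) (ω : ℝ), 0 < ω → ∀ ε > 0, ∀ᶠ s in 𝓝[RHP] (jw ω),
      -ε < ((qf (G 0) x - qf (G s) x) / s).re := by
    intro x ω hω ε hε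
    obtain ⟨R, K, hR, hK, ht⟩ := h.axis ω hω
    set r := (qf R x).re with hr
    have hr0 : 0 ≤ r := PosSemidef.qf_re hR x
    have hrq : qf R x = (r : ℂ) := by
      apply Complex.ext
      · simp [hr]
      · simp [im_zero_of_isHermitian R hR.1 x]
    have hj0 : jw ω ≠ 0 := by
      intro h0
      have := jw_im ω
      rw [h0] at this
      simp at this
      exact hω.ne this
    have ht1 : Tendsto (fun s => qf (G s + (Complex.I / (s - jw ω)) • R) x) (𝓝[RHP] (jw ω))
        (𝓝 (qf K x)) := ((continuous_qf x).tendsto K).comp (ht.mono_left (RHP_nhds_le ω))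
    have hid : Tendsto (fun s : ℂ => s) (𝓝[RHP] (jw ω)) (𝓝 (jw ω)) :=
      tendsto_id.mono_left nhdsWithin_le_nhds
    have ht2 : Tendsto (fun s => ((qf (G 0) x - qf (G s + (Complex.I / (s - jw ω)) • R) x) / s
        - (r / ω : ℝ) * (1 / s)).re)
        (𝓝[RHP] (jw ω)) (𝓝 ((qf (G 0) x - qf K x) / jw ω - (r / ω : ℝ) * (1 / jw ω)).re) := by
      apply (Complex.continuous_re.tendsto _).comp
      exact ((tendsto_const_nhds.sub ht1).div hid hj0).sub
        (tendsto_const_nhds.mul (tendsto_const_nhds.div hid hj0))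
    have hlim : 0 ≤ ((qf (G 0) x - qf K x) / jw ω - (r / ω : ℝ) * (1 / jw ω)).re := by
      have e : (qf (G 0) x - qf K x) / jw ω - (r / ω : ℝ) * (1 / jw ω) =
          ((ω⁻¹ : ℝ) : ℂ) * (-Complex.I * (qf (G 0) x - qf K x - (r / ω : ℝ))) := by
        have : (ω : ℂ) ≠ 0 := by exact_mod_cast hω.ne'
        simp only [jw]
        push_cast
        field_simp
        linear_combination ((ω : ℂ) * qf (G 0) x - ω * qf K x - r) * Complex.I_sq
      rw [e, Complex.re_ofReal_mul]
      apply mul_nonneg (by positivity)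
      simp [h.zero_im x]
      linarith [hK x]
    filter_upwards [ht2.eventually (lt_mem_nhds (show -ε < _ by linarith)), self_mem_nhdsWithin]
      with s hs hsR
    have hsR' : 0 < s.re := hsR
    have hs0 : s ≠ 0 := by rintro rfl; simp at hsR'
    have hz0 : s - jw ω ≠ 0 := by
      intro h0
      have := congrArg Complex.re h0
      simp [jw_re] at this
      linarith
    have e : (qf (G 0) x - qf (G s) x) / s =
        ((qf (G 0) x - qf (G s + (Complex.I / (s - jw ω)) • R) x) / s - (r / ω : ℝ) * (1 / s))
          + ((r / ω : ℝ) : ℂ) * (s - jw ω)⁻¹ := by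
      rw [qf_add, qf_smul, hrq]
      have : (ω : ℂ) ≠ 0 := by exact_mod_cast hω.ne'
      push_cast
      field_simp
      simp only [jw]
      ring
    rw [e, Complex.add_re, Complex.re_ofReal_mul]
    have h5 : 0 ≤ r / ω * ((s - jw ω)⁻¹).re := by
      apply mul_nonneg (by positivity)
      rw [Complex.inv_re]
      apply div_nonneg _ (Complex.normSq_nonneg _)
      simp [jw_re]; linarith
    linarith
  apply min_principle
  · intro s hs
    have hs0 : s ≠ 0 := by
      rintro rfl; simp [RHP] at hs
    exact (((differentiableAt_const _).sub (diff_qf x (h.diff s hs))).div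
      differentiableAt_id hs0).differentiableWithinAt
  · intro ω ε hε
    rcases lt_trichotomy ω 0 with hω | hω | hω
    · have h1 := (tendsto_conj_RHP ω).eventually (hpos (star x) (-ω) (by linarith) ε hε)
      filter_upwards [h1] with s hs
      have h2 : G 0 = (G 0).map (starRingEnd ℂ) := by simpa using h.conj 0
      rw [h.conj s, qf_conj, h2, qf_conj, ← map_sub, ← map_div₀, Complex.conj_re] at hs
      exact hs
    · subst hω
      have h0 : jw 0 = 0 := by simp [jw]
      have hder := (diff_qf x h.zero).hasDerivAt.tendsto_slope
      set D := deriv (fun s => qf (G s) x) 0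
      have hD : Tendsto (fun s => ((qf (G 0) x - qf (G s) x) / s).re) (𝓝[≠] 0) (𝓝 (-D).re) := by
        apply (Complex.continuous_re.tendsto _).comp
        refine hder.neg.congr fun s => ?_
        simp only [slope_def_field, sub_zero]
        ring
      have hD0 : 0 ≤ (-D).re := by
        have hj : Tendsto jw (𝓝[>] 0) (𝓝[≠] 0) := by
          apply tendsto_nhdsWithin_of_tendsto_nhds_of_eventually_within
          · have := continuous_jw.tendsto 0
            rw [h0] at this
            exact this.mono_left nhdsWithin_le_nhds
          · filter_upwards [self_mem_nhdsWithin] with ω hω hc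
            have hc' : jw ω = 0 := hc
            have := jw_im ω
            rw [hc'] at this
            exact (ne_of_gt hω) this.symm
        refine ge_of_tendsto (hD.comp hj) ?_
        filter_upwards [h.small, self_mem_nhdsWithin] with ω hN hω
        have hω' : 0 < ω := hω
        have e : (qf (G 0) x - qf (G (jw ω)) x) / jw ω =
          ((ω⁻¹ : ℝ) : ℂ) * (-Complex.I * (qf (G 0) x - qf (G (jw ω)) x)) := by
          have : (ω : ℂ) ≠ 0 := by exact_mod_cast hω'.ne'
          generalize qf (G (jw ω)) x = k
          simp only [jw]
          push_cast
          field_simp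
          linear_combination (qf (G 0) x - k) * Complex.I_sq
        simp only [Function.comp]
        rw [e, Complex.re_ofReal_mul]
        apply mul_nonneg (by positivity)
        simp [h.zero_im x]
        exact hN x
      have hle := RHP_nhds_le 0
      rw [h0] at hle ⊢
      exact (hD.mono_left hle).eventually (lt_mem_nhds (show -ε < _ by linarith))
    · exact hpos x ω hω ε hε
  · intro ε hε
    have h1 : Tendsto (fun s => ((qf (G 0) x - qf (G s) x) / s).re) (Bornology.cobounded ℂ)
        (𝓝 ((qf (G 0) x - qf Ginf x) * 0).re) := by
      apply (Complex.continuous_re.tendsto _).comp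
      simp only [div_eq_mul_inv]
      exact (tendsto_const_nhds.sub (((continuous_qf x).tendsto _).comp h.inf)).mul
        tendsto_inv₀_cobounded
    simp only [mul_zero, Complex.zero_re] at h1
    filter_upwards [h1.eventually (lt_mem_nhds (show -ε < 0 by linarith))] with s hs _
    exact hs

lemma tendsto_ofReal_cobounded : Tendsto (fun x : ℝ => (x : ℂ)) atTop (Bornology.cobounded ℂ) := by
  rw [← comap_norm_atTop, tendsto_comap_iff]
  have : (norm ∘ fun x : ℝ => (x : ℂ)) = fun ω => |ω| := by ext ω; simp
  rw [this]
  exact tendsto_abs_atTop_atTop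

lemma NIF.inf_le (h : NIF G Ginf) (x : m → ℂ) : (qf Ginf x).re ≤ (qf (G 0) x).re := by
  have h1 : Tendsto (fun t : ℝ => (qf (G t) x).re) atTop (𝓝 (qf Ginf x).re) :=
    (Complex.continuous_re.tendsto _).comp
      (((continuous_qf x).tendsto _).comp (h.inf.comp tendsto_ofReal_cobounded))
  refine le_of_tendsto h1 ?_
  filter_upwards [eventually_gt_atTop 0] with t ht
  have := h.pr x (t : ℂ) (by simpa [RHP] using ht)
  rw [Complex.div_ofReal_re] at this
  have h2 : 0 ≤ (qf (G 0) x - qf (G t) x).re := by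
    by_contra hn
    push Not at hn
    exact absurd this (not_le.2 (div_neg_of_neg_of_pos hn ht))
  simp at h2
  exact h2

lemma NIF.sub_posSemidef [DecidableEq m] (h : NIF G Ginf) : (G 0 - Ginf).PosSemidef := by
  apply posSemidef_of_qf
  · apply isHermitian_of_im_zero
    intro x
    rw [qf_sub, Complex.sub_im, h.zero_im, h.inf_im, sub_zero]
  · intro x
    rw [qf_sub, Complex.sub_re]
    linarith [h.inf_le x]

end PR

section LA
variable {m : Type*} [Fintype m] [DecidableEq m]

lemma qf_mul_conj (A U : Matrix m m ℂ) (y : m → ℂ) : qf A (U *ᵥ y) = qf (Uᴴ * A * U) y := by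
  simp only [qf, star_mulVec, dotProduct_mulVec, vecMul_vecMul, mul_assoc]

lemma qf_diagonal (d : m → ℝ) (y : m → ℂ) :
    (qf (diagonal fun i => (d i : ℂ)) y).re = ∑ i, d i * Complex.normSq (y i) := by
  simp only [qf, mulVec_diagonal, dotProduct, Complex.re_sum]
  refine Finset.sum_congr rfl fun i _ => ?_
  simp [Complex.normSq_apply]
  ring

lemma exists_sign (A A' : Matrix m m ℂ) (hA : A.IsHermitian) (h : A * A' = 1) :
    ∃ p q : (m → ℂ) →ₗ[ℂ] (m → ℂ), (∀ z, p z + q z = z) ∧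
      (∀ z, p z ≠ 0 → 0 < (qf A (p z)).re) ∧ (∀ z, q z ≠ 0 → (qf A' (q z)).re < 0) := by
  classical
  obtain ⟨U, d, hU1, hU2, hAU⟩ : ∃ (U : Matrix m m ℂ) (d : m → ℝ), Uᴴ * U = 1 ∧ U * Uᴴ = 1 ∧
      Uᴴ * A * U = diagonal fun i => (d i : ℂ) := by
    have h1 := Unitary.star_mul_self_of_mem hA.eigenvectorUnitary.2
    have h2 := Unitary.mul_star_self_of_mem hA.eigenvectorUnitary.2
    refine ⟨hA.eigenvectorUnitary, hA.eigenvalues, h1, h2, ?_⟩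
    have := hA.spectral_theorem
    rw [Unitary.conjStarAlgAut_apply] at this
    rw [← star_eq_conjTranspose]
    generalize (hA.eigenvectorUnitary : Matrix m m ℂ) = V at *
    generalize hA.eigenvalues = e at *
    rw [this]
    calc star V * (V * diagonal (RCLike.ofReal ∘ e) * star V) * V
        = (star V * V) * diagonal (RCLike.ofReal ∘ e) * (star V * V) := by
          simp only [mul_assoc]
      _ = _ := by rw [h1, one_mul, mul_one]; rfl
  have hX : (diagonal fun i => (d i : ℂ)) * (Uᴴ * A' * U) = 1 := by
    rw [← hAU]
    calc Uᴴ * A * U * (Uᴴ * A' * U) = Uᴴ * A * (U * Uᴴ) * A' * U := by simp only [mul_assoc]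
      _ = Uᴴ * (A * A') * U := by rw [hU2, mul_one]; simp only [mul_assoc]
      _ = 1 := by rw [h, mul_one, hU1]
  have hd : ∀ i, d i ≠ 0 := by
    intro i h0
    have := congrFun (congrFun hX i) i
    rw [diagonal_mul] at this
    simp [h0] at this
  have hX' : Uᴴ * A' * U = diagonal fun i => (((d i)⁻¹ : ℝ) : ℂ) := by
    have h3 : (diagonal fun i => (((d i)⁻¹ : ℝ) : ℂ)) * (diagonal fun i => (d i : ℂ)) = 1 := by
      rw [diagonal_mul_diagonal, ← diagonal_one]
      congr 1
      ext i
      have : (d i : ℂ) ≠ 0 := by exact_mod_cast hd i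
      push_cast
      field_simp
    calc Uᴴ * A' * U = ((diagonal fun i => (((d i)⁻¹ : ℝ) : ℂ)) * (diagonal fun i => (d i : ℂ)))
          * (Uᴴ * A' * U) := by rw [h3, one_mul]
      _ = _ := by rw [mul_assoc, hX, mul_one]
  let Ep : Matrix m m ℂ := diagonal fun i => if 0 < d i then 1 else 0
  let Eq : Matrix m m ℂ := diagonal fun i => if 0 < d i then 0 else 1
  have hE : Ep + Eq = 1 := by
    simp only [Ep, Eq, diagonal_add]
    rw [← diagonal_one]
    congr 1
    ext i
    split_ifs <;> simp
  refine ⟨toLin' (U * (Ep * Uᴴ)), toLin' (U * (Eq * Uᴴ)), ?_, ?_, ?_⟩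
  · intro z
    rw [← LinearMap.add_apply, ← map_add, ← mul_add, ← add_mul, hE, one_mul, hU2]
    simp
  · intro z hz
    rw [toLin'_apply, ← mulVec_mulVec] at hz ⊢
    rw [qf_mul_conj, hAU, qf_diagonal]
    have hne : (Ep * Uᴴ) *ᵥ z ≠ 0 := by
      intro h0; rw [h0] at hz; simp at hz
    rw [← mulVec_mulVec] at hne ⊢
    set w := Uᴴ *ᵥ z
    obtain ⟨i, hi⟩ := Function.ne_iff.1 hne
    have hterm : ∀ j, 0 ≤ d j * Complex.normSq ((Ep *ᵥ w) j) := by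
      intro j
      simp only [Ep, mulVec_diagonal]
      split_ifs with h1
      · exact mul_nonneg h1.le (Complex.normSq_nonneg _)
      · simp
    refine Finset.sum_pos' (fun j _ => hterm j) ⟨i, Finset.mem_univ i, ?_⟩
    have hdi : 0 < d i := by
      by_contra hn
      simp [Ep, mulVec_diagonal, hn] at hi
    exact mul_pos hdi (Complex.normSq_pos.2 hi)
  · intro z hz
    rw [toLin'_apply, ← mulVec_mulVec] at hz ⊢
    rw [qf_mul_conj, hX', qf_diagonal]
    have hne : (Eq * Uᴴ) *ᵥ z ≠ 0 := by
      intro h0; rw [h0] at hz; simp at hz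
    rw [← mulVec_mulVec] at hne ⊢
    set w := Uᴴ *ᵥ z
    obtain ⟨i, hi⟩ := Function.ne_iff.1 hne
    have hterm : ∀ j, (d j)⁻¹ * Complex.normSq ((Eq *ᵥ w) j) ≤ 0 := by
      intro j
      simp only [Eq, mulVec_diagonal]
      split_ifs with h1
      · simp
      · exact mul_nonpos_of_nonpos_of_nonneg (inv_nonpos.2 (not_lt.1 h1)) (Complex.normSq_nonneg _)
    refine Finset.sum_neg' (fun j _ => hterm j) ⟨i, Finset.mem_univ i, ?_⟩
    have hdi : d i < 0 := by
      by_contra hn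
      have : 0 < d i := lt_of_le_of_ne (not_lt.1 hn) (hd i).symm
      simp [Eq, mulVec_diagonal, this] at hi
    exact mul_neg_of_neg_of_pos (inv_lt_zero.2 hdi) (Complex.normSq_pos.2 hi)

/-- Between two matrices of the same inertia everything is nonsingular. -/
lemma between_nonsing (A A' B B' X : Matrix m m ℂ) (hA : A.IsHermitian) (hB' : B'.IsHermitian)
    (hX : X.IsHermitian)
    (hAA : A * A' = 1) (hBB : B * B' = 1)
    (hAX : ∀ x, (qf A x).re ≤ (qf X x).re) (hXB : ∀ x, (qf X x).re ≤ (qf B x).re)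
    (hinv : ∀ x, (qf B' x).re ≤ (qf A' x).re) (v : m → ℂ) (hv : X *ᵥ v = 0) : v = 0 := by
  obtain ⟨p, q, hpq, hp, hq⟩ := exists_sign A A' hA hAA
  have hBq : ∀ w, qf B (B' *ᵥ w) = qf B' w := by
    intro w
    rw [qf_mul_conj, hB'.eq, mul_assoc, hBB, mul_one]
  let T : (m → ℂ) →ₗ[ℂ] (m → ℂ) := p + (toLin' B').comp q
  have hTz : ∀ z, T z = p z + B' *ᵥ (q z) := fun z => by simp [T]
  have hbneg : ∀ z, q z ≠ 0 → (qf B (B' *ᵥ q z)).re < 0 := by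
    intro z hz
    rw [hBq]
    exact (hinv _).trans_lt (hq z hz)
  have hinj : Function.Injective T := by
    rw [injective_iff_map_eq_zero]
    intro z hz
    rw [hTz] at hz
    have hy : p z = -(B' *ᵥ q z) := eq_neg_of_add_eq_zero_left hz
    have hneg : qf B (p z) = qf B (B' *ᵥ q z) := by
      rw [hy]; simp [qf, mulVec_neg]
    by_cases hq0 : q z = 0
    · rw [hq0] at hy
      have := hpq z
      rw [hq0, hy] at this
      simpa using this.symm
    · exfalso
      have h1 := hbneg z hq0
      rw [← hneg] at h1
      by_cases hp0 : p z = 0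
      · rw [hp0] at h1; simp [qf] at h1
      · linarith [hp z hp0, hAX (p z), hXB (p z)]
  have hsurj : Function.Surjective T := LinearMap.injective_iff_surjective.1 hinj
  obtain ⟨z, rfl⟩ := hsurj v
  rw [hTz] at hv ⊢
  set a := p z with ha
  set b := B' *ᵥ q z with hb
  have hcross : (star b ⬝ᵥ X *ᵥ a) = (starRingEnd ℂ) (star a ⬝ᵥ X *ᵥ b) := by
    change _ = star (star a ⬝ᵥ X *ᵥ b)
    rw [star_dotProduct, star_mulVec, hX.eq, ← dotProduct_mulVec]
  have hz0 : (star (a - b) ⬝ᵥ X *ᵥ (a + b)).re = 0 := by rw [hv]; simp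
  have hexp : (star (a - b) ⬝ᵥ X *ᵥ (a + b)).re = (qf X a).re - (qf X b).re := by
    rw [star_sub, sub_dotProduct, mulVec_add, dotProduct_add, dotProduct_add, hcross]
    simp [qf]
    ring
  have hqb : q z = 0 → b = 0 := by intro h; rw [hb, h]; simp
  have ha0 : 0 ≤ (qf X a).re := by
    by_cases h : a = 0
    · rw [h]; simp [qf]
    · linarith [hp z h, hAX a]
  have hb0 : (qf X b).re ≤ 0 := by
    by_cases h : q z = 0
    · rw [hqb h]; simp [qf]
    · linarith [hbneg z h, hXB b]
  have h1 : a = 0 := by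
    by_contra h
    linarith [hp z h, hAX a]
  have h2 : b = 0 := by
    by_contra h
    have : q z ≠ 0 := fun h' => h (hqb h')
    linarith [hbneg z this, hXB b]
  rw [h1, h2, add_zero]

lemma mem_spectrum_iff_exists (M : Matrix m m ℂ) (μ : ℂ) :
    μ ∈ spectrum ℂ M ↔ ∃ y, y ≠ 0 ∧ M *ᵥ y = μ • y := by
  rw [spectrum.mem_iff, isUnit_iff_isUnit_det, isUnit_iff_ne_zero, not_not,
    ← exists_mulVec_eq_zero_iff]
  refine exists_congr fun y => and_congr_right fun _ => ?_
  rw [sub_mulVec, sub_eq_zero, Algebra.algebraMap_eq_smul_one, smul_mulVec, one_mulVec, eq_comm]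

/-- Eigenvalue conditions as nonsingularity along a segment. -/
lemma eig_iff (X0 X1 Y : Matrix m m ℂ) (hX1 : X1.IsHermitian)
    (hY : Y.IsHermitian) (hD : (X0 - X1).PosSemidef) (hN : (1 - X1 * Y).det ≠ 0) :
    (∀ μ ∈ spectrum ℂ ((X0 * Y - 1) * (1 - X1 * Y)⁻¹), μ.im = 0 ∧ μ.re < 0) ↔
      ∀ t ∈ Set.Icc (0:ℝ) 1, (1 - (X1 + (t : ℂ) • (X0 - X1)) * Y).det ≠ 0 := by
  set D := X0 - X1 with hDdef
  set N := 1 - X1 * Y with hNdef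
  have hNu : IsUnit N.det := isUnit_iff_ne_zero.2 hN
  have e1 : X0 * Y - 1 = D * Y - N := by rw [hDdef, hNdef, sub_mul]; abel
  have e2 : ∀ t : ℂ, 1 - (X1 + t • D) * Y = N - t • (D * Y) := by
    intro t; rw [hNdef, add_mul, smul_mul_assoc]; abel
  have hNinj : ∀ z, N *ᵥ z = 0 → z = 0 := by
    intro z hz
    by_contra h
    exact hN (exists_mulVec_eq_zero_iff.1 ⟨z, h, hz⟩)
  constructor
  · intro h t ht hdet
    obtain ⟨z, hz, hz0⟩ := exists_mulVec_eq_zero_iff.2 hdet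
    rw [e2, sub_mulVec, sub_eq_zero, smul_mulVec] at hz0
    have ht0 : t ≠ 0 := by
      rintro rfl
      simp at hz0
      exact hz (hNinj z hz0)
    have htc : (t : ℂ) ≠ 0 := by exact_mod_cast ht0
    have htpos : 0 < t := lt_of_le_of_ne ht.1 ht0.symm
    have hmem : (((1 / t - 1 : ℝ)) : ℂ) ∈ spectrum ℂ ((X0 * Y - 1) * N⁻¹) := by
      rw [mem_spectrum_iff_exists]
      refine ⟨N *ᵥ z, fun h0 => hz (hNinj z h0), ?_⟩
      rw [mulVec_mulVec, mul_assoc, nonsing_inv_mul _ hNu, mul_one, e1, sub_mulVec]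
      have : (D * Y) *ᵥ z = (1 / t : ℂ) • N *ᵥ z := by
        rw [hz0, smul_smul]; field_simp; simp
      rw [this]
      push_cast
      rw [sub_smul, one_smul]
    have h2 := (h _ hmem).2
    rw [Complex.ofReal_re] at h2
    have : 1 ≤ 1 / t := by rw [le_div_iff₀ htpos]; linarith [ht.2]
    linarith
  · intro h μ hμ
    rw [mem_spectrum_iff_exists] at hμ
    obtain ⟨y, hy, hyM⟩ := hμ
    set z := N⁻¹ *ᵥ y with hz
    have hNz : N *ᵥ z = y := by rw [hz, mulVec_mulVec, mul_nonsing_inv _ hNu, one_mulVec]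
    rw [← mulVec_mulVec, ← hz, e1, sub_mulVec, hNz, sub_eq_iff_eq_add] at hyM
    have hDY : D *ᵥ (Y *ᵥ z) = (μ + 1) • N *ᵥ z := by
      rw [mulVec_mulVec, hyM, hNz, add_smul, one_smul]
    have hz0 : z ≠ 0 := by
      intro h0; rw [h0] at hNz; simp at hNz; exact hy hNz.symm
    set κ := (qf Y z).re - (qf X1 (Y *ᵥ z)).re with hκ
    have hκc : star (Y *ᵥ z) ⬝ᵥ N *ᵥ z = (κ : ℂ) := by
      have a1 : star (Y *ᵥ z) ⬝ᵥ z = qf Y z := by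
        rw [qf, star_mulVec Y z, hY.eq, dotProduct_mulVec (star z) Y z]
      rw [hNdef, sub_mulVec, one_mulVec, dotProduct_sub, a1, ← mulVec_mulVec]
      change qf Y z - qf X1 (Y *ᵥ z) = _
      apply Complex.ext
      · simp [hκ]
      · simp [im_zero_of_isHermitian _ hY, im_zero_of_isHermitian _ hX1]
    have hq : qf D (Y *ᵥ z) = (μ + 1) * κ := by
      rw [qf, hDY, dotProduct_smul, hκc, smul_eq_mul]
    have him : (qf D (Y *ᵥ z)).im = 0 := im_zero_of_isHermitian _ hD.1 _
    have hμim : μ.im = 0 := by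
      rcases eq_or_ne κ 0 with h0 | h0
      · rw [h0] at hq
        have h3 : D *ᵥ (Y *ᵥ z) = 0 := by
          refine (hD.dotProduct_mulVec_zero_iff _).1 ?_
          change qf D (Y *ᵥ z) = 0
          rw [hq]; simp
        rw [h3, hNz] at hDY
        have := (smul_eq_zero.1 hDY.symm).resolve_right hy
        have := congrArg Complex.im this
        simpa using this
      · rw [hq, Complex.im_mul_ofReal] at him
        simpa using (mul_eq_zero.1 him).resolve_right h0
    refine ⟨hμim, ?_⟩
    by_contra hre
    push Not at hre
    have hpos : 0 < μ.re + 1 := by linarith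
    have hμr : μ + 1 = ((μ.re + 1 : ℝ) : ℂ) := by
      apply Complex.ext <;> simp [hμim]
    refine h (1 / (μ.re + 1)) ⟨by positivity, ?_⟩ ?_
    · rw [div_le_one hpos]; linarith
    · rw [← exists_mulVec_eq_zero_iff]
      refine ⟨z, hz0, ?_⟩
      rw [e2, sub_mulVec, smul_mulVec, ← mulVec_mulVec, hDY, hμr, smul_smul, ← Complex.ofReal_mul]
      rw [one_div_mul_cancel hpos.ne']
      simp

lemma det_sub_mul_comm (A B : Matrix m m ℂ) : (1 - A * B).det = (1 - B * A).det :=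
  det_one_sub_mul_comm A B

/-- Basic energy estimate. -/
lemma energy (P C : Matrix m m ℂ) (u v w1 w2 : m → ℂ) (c ε : ℝ)
    (hC : ∀ x, c * ‖x‖ ^ 2 ≤ -(qf C x).im) (hP : ∀ x, -ε * ‖x‖ ^ 2 ≤ -(qf P x).im)
    (h1 : u = C *ᵥ v + w1) (h2 : v = P *ᵥ u + w2) :
    c * ‖v‖ ^ 2 ≤ ε * ‖u‖ ^ 2 + Fintype.card m * (‖v‖ * ‖w1‖ + ‖u‖ * ‖w2‖) := by
  have a1 : star v ⬝ᵥ u = qf C v + star v ⬝ᵥ w1 := by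
    conv_lhs => rw [h1]
    rw [dotProduct_add]; rfl
  have a2 : star u ⬝ᵥ v = qf P u + star u ⬝ᵥ w2 := by
    conv_lhs => rw [h2]
    rw [dotProduct_add]; rfl
  have a3 : (star u ⬝ᵥ v).im = -(star v ⬝ᵥ u).im := by
    have : star u ⬝ᵥ v = star (star v ⬝ᵥ u) := by
      rw [star_dotProduct]
    rw [this]; simp
  have b1 := congrArg Complex.im a1
  have b2 := congrArg Complex.im a2
  rw [Complex.add_im] at b1 b2
  have c1 := (Complex.abs_im_le_norm _).trans (norm_dot_le v w1)
  have c2 := (Complex.abs_im_le_norm _).trans (norm_dot_le u w2)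
  have d1 := (abs_le.1 c1).2
  have d2 := (abs_le.1 c2).2
  have := hC v
  have := hP u
  rw [mul_add]
  linarith

lemma quad_bound {c ε K N V W U : ℝ} (hc : 0 < c) (hε : 0 ≤ ε) (hK : 0 ≤ K) (hN : 0 ≤ N)
    (hV : 0 ≤ V) (hW : 0 ≤ W) (hU : 0 ≤ U)
    (hsmall : 4 * ε * K ^ 2 ≤ c) (hUV : U ≤ K * V + W)
    (h : c * V ^ 2 ≤ ε * U ^ 2 + N * (V * W + U * W)) :
    V ≤ (1 + 2 / c * (2 * ε + N * (2 + K))) * W := by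
  have hB : 0 ≤ 2 / c * (2 * ε + N * (2 + K)) := by positivity
  by_cases hVW : V ≤ W
  · nlinarith
  push Not at hVW
  have hVpos : 0 < V := lt_of_le_of_lt hW hVW
  have hU2 : U ^ 2 ≤ 2 * K ^ 2 * V ^ 2 + 2 * W ^ 2 := by
    have : U ^ 2 ≤ (K * V + W) ^ 2 := by gcongr
    nlinarith [sq_nonneg (K * V - W)]
  have hW2 : W ^ 2 ≤ V * W := by nlinarith
  have h1 : ε * U ^ 2 ≤ c / 2 * V ^ 2 + 2 * ε * (V * W) := by
    have a := mul_le_mul_of_nonneg_left hU2 hε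
    have b := mul_le_mul_of_nonneg_left hW2 hε
    have d := mul_le_mul_of_nonneg_right hsmall (sq_nonneg V)
    nlinarith
  have h2 : V * W + U * W ≤ (2 + K) * (V * W) := by
    have := mul_le_mul_of_nonneg_right hUV hW
    nlinarith
  have h3 := mul_le_mul_of_nonneg_left h2 hN
  have h4 : c / 2 * V * V ≤ (2 * ε + N * (2 + K)) * W * V := by nlinarith
  have h5 : c / 2 * V ≤ (2 * ε + N * (2 + K)) * W := le_of_mul_le_mul_right h4 hVpos
  have h6 : V ≤ 2 / c * (2 * ε + N * (2 + K)) * W := by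
    have : V = 2 / c * (c / 2 * V) := by field_simp
    rw [this, mul_assoc]
    gcongr
  nlinarith

end LA

section rat

lemma evalC_def (f : RatFunc ℝ) (s : ℂ) :
    evalC f s = f.num.eval₂ (algebraMap ℝ ℂ) s / f.denom.eval₂ (algebraMap ℝ ℂ) s := rfl

lemma regular_of_dvd {f : RatFunc ℝ} {q : ℝ[X]} {s : ℂ} (h : f.denom ∣ q)
    (hq : q.eval₂ (algebraMap ℝ ℂ) s ≠ 0) : ¬ IsPoleAt f s := fun hf =>
  hq (Polynomial.eval₂_eq_zero_of_dvd_of_eval₂_eq_zero _ _ h hf)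

lemma regular_add {f g : RatFunc ℝ} {s : ℂ} (hf : ¬ IsPoleAt f s) (hg : ¬ IsPoleAt g s) :
    ¬ IsPoleAt (f + g) s :=
  regular_of_dvd (RatFunc.denom_add_dvd f g) (by
    rw [Polynomial.eval₂_mul]; exact mul_ne_zero hf hg)

lemma regular_mul {f g : RatFunc ℝ} {s : ℂ} (hf : ¬ IsPoleAt f s) (hg : ¬ IsPoleAt g s) :
    ¬ IsPoleAt (f * g) s :=
  regular_of_dvd (RatFunc.denom_mul_dvd f g) (by
    rw [Polynomial.eval₂_mul]; exact mul_ne_zero hf hg)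

lemma regular_C (c : ℝ) (s : ℂ) : ¬ IsPoleAt (RatFunc.C c) s := by
  simp [IsPoleAt]

/-- Rational functions regular at `s`. -/
def regRing (s : ℂ) : Subring (RatFunc ℝ) where
  carrier := {f | ¬ IsPoleAt f s}
  mul_mem' := regular_mul
  one_mem' := by simpa using regular_C 1 s
  add_mem' := regular_add
  zero_mem' := by simpa using regular_C 0 s
  neg_mem' := by
    intro f hf
    have := regular_mul (regular_C (-1) s) hf
    simpa using this

lemma mem_regRing {f : RatFunc ℝ} {s : ℂ} : f ∈ regRing s ↔ ¬ IsPoleAt f s := Iff.rfl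

/-- Evaluation of regular rational functions. -/
def evHom (s : ℂ) : regRing s →+* ℂ where
  toFun f := evalC f s
  map_one' := by simp [evalC]
  map_mul' f g := RatFunc.eval_mul (algebraMap ℝ ℂ) s f.2 g.2
  map_zero' := by simp [evalC]
  map_add' f g := RatFunc.eval_add (algebraMap ℝ ℂ) s f.2 g.2

/-- Lift of a matrix without poles. -/
def liftM (A : Matrix (Fin n) (Fin n) (RatFunc ℝ)) (s : ℂ) (h : ¬ HasPole A s) :
    Matrix (Fin n) (Fin n) (regRing s) :=
  Matrix.of fun i j => ⟨A i j, fun hp => h ⟨i, j, hp⟩⟩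

lemma evalM_of_lift {A : Matrix (Fin n) (Fin n) (RatFunc ℝ)} {s : ℂ}
    (B : Matrix (Fin n) (Fin n) (regRing s)) (h : (regRing s).subtype.mapMatrix B = A) :
    ¬ HasPole A s ∧ evalM A s = (evHom s).mapMatrix B := by
  subst h
  refine ⟨?_, ?_⟩
  · rintro ⟨i, j, hp⟩
    exact (B i j).2 hp
  · ext i j
    rfl

lemma lift_spec (A : Matrix (Fin n) (Fin n) (RatFunc ℝ)) (s : ℂ) (h : ¬ HasPole A s) :
    (regRing s).subtype.mapMatrix (liftM A s h) = A := by
  ext i j; rfl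

lemma evalM_mul {A B : Matrix (Fin n) (Fin n) (RatFunc ℝ)} {s : ℂ} (hA : ¬ HasPole A s)
    (hB : ¬ HasPole B s) : ¬ HasPole (A * B) s ∧ evalM (A * B) s = evalM A s * evalM B s := by
  have h := evalM_of_lift (A := A * B) (liftM A s hA * liftM B s hB)
    (by rw [map_mul, lift_spec, lift_spec])
  refine ⟨h.1, ?_⟩
  rw [h.2, map_mul, ← (evalM_of_lift _ (lift_spec A s hA)).2,
    ← (evalM_of_lift _ (lift_spec B s hB)).2]

lemma evalM_sub {A B : Matrix (Fin n) (Fin n) (RatFunc ℝ)} {s : ℂ} (hA : ¬ HasPole A s)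
    (hB : ¬ HasPole B s) : ¬ HasPole (A - B) s ∧ evalM (A - B) s = evalM A s - evalM B s := by
  have h := evalM_of_lift (A := A - B) (liftM A s hA - liftM B s hB)
    (by rw [map_sub, lift_spec, lift_spec])
  refine ⟨h.1, ?_⟩
  rw [h.2, map_sub, ← (evalM_of_lift _ (lift_spec A s hA)).2,
    ← (evalM_of_lift _ (lift_spec B s hB)).2]

lemma evalM_one (s : ℂ) : ¬ HasPole (1 : Matrix (Fin n) (Fin n) (RatFunc ℝ)) s ∧
    evalM (1 : Matrix (Fin n) (Fin n) (RatFunc ℝ)) s = 1 := by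
  have h := evalM_of_lift (A := (1 : Matrix (Fin n) (Fin n) (RatFunc ℝ)))
    (1 : Matrix (Fin n) (Fin n) (regRing s)) (by rw [map_one])
  refine ⟨h.1, ?_⟩
  rw [h.2, map_one]

lemma evalC_det {A : Matrix (Fin n) (Fin n) (RatFunc ℝ)} {s : ℂ} (hA : ¬ HasPole A s) :
    evalC A.det s = (evalM A s).det := by
  have h := evalM_of_lift _ (lift_spec A s hA)
  rw [h.2, ← RingHom.map_det]
  have : A.det = (regRing s).subtype (liftM A s hA).det := by
    rw [RingHom.map_det, lift_spec]
  rw [this]; rfl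

lemma finite_roots {q : ℝ[X]} (hq : q ≠ 0) : {s : ℂ | q.eval₂ (algebraMap ℝ ℂ) s = 0}.Finite := by
  have h : q.map (algebraMap ℝ ℂ) ≠ 0 := by
    rwa [Ne, Polynomial.map_eq_zero]
  have := Polynomial.finite_setOfPred_isRoot h
  refine this.subset fun s hs => ?_
  simpa [Polynomial.IsRoot, Polynomial.eval_map] using hs

lemma finite_pole (f : RatFunc ℝ) : {s : ℂ | IsPoleAt f s}.Finite := finite_roots f.denom_ne_zero

lemma finite_hasPole (G : Matrix (Fin n) (Fin n) (RatFunc ℝ)) : {s : ℂ | HasPole G s}.Finite := by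
  have : {s : ℂ | HasPole G s} = ⋃ i, ⋃ j, {s | IsPoleAt (G i j) s} := by
    ext s; simp [HasPole]
  rw [this]
  exact Set.finite_iUnion fun i => Set.finite_iUnion fun j => finite_pole _

lemma cofinite_noPole (G : Matrix (Fin n) (Fin n) (RatFunc ℝ)) :
    ∀ᶠ s in cofinite, ¬ HasPole G s := by
  have := (finite_hasPole G).compl_mem_cofinite
  exact this

lemma eventually_noPole (G : Matrix (Fin n) (Fin n) (RatFunc ℝ)) (s₀ : ℂ) :
    ∀ᶠ s in 𝓝[≠] s₀, ¬ HasPole G s := nhdsNE_le_cofinite s₀ (cofinite_noPole G)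

lemma eventually_noPole_inf (G : Matrix (Fin n) (Fin n) (RatFunc ℝ)) :
    ∀ᶠ s in Bornology.cobounded ℂ, ¬ HasPole G s :=
  Bornology.le_cofinite ℂ (cofinite_noPole G)

lemma eval₂_conj (q : ℝ[X]) (s : ℂ) : q.eval₂ (algebraMap ℝ ℂ) ((starRingEnd ℂ) s) =
    (starRingEnd ℂ) (q.eval₂ (algebraMap ℝ ℂ) s) := by
  rw [Polynomial.hom_eval₂]
  congr 1
  ext x; simp

lemma evalC_conj (f : RatFunc ℝ) (s : ℂ) :
    evalC f ((starRingEnd ℂ) s) = (starRingEnd ℂ) (evalC f s) := by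
  rw [evalC_def, evalC_def, eval₂_conj, eval₂_conj, map_div₀]

lemma evalM_conj (G : Matrix (Fin n) (Fin n) (RatFunc ℝ)) (s : ℂ) :
    evalM G ((starRingEnd ℂ) s) = (evalM G s).map (starRingEnd ℂ) := by
  ext i j; simp [evalM, evalC_conj]

lemma evalM_zero_eq (G : Matrix (Fin n) (Fin n) (RatFunc ℝ)) :
    evalM G 0 = (evalR G 0).map Complex.ofReal := by
  have key : ∀ q : ℝ[X], q.eval₂ (algebraMap ℝ ℂ) 0 =
      ((q.eval₂ (RingHom.id ℝ) 0 : ℝ) : ℂ) := by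
    intro q
    have := Polynomial.hom_eval₂ q (RingHom.id ℝ) (algebraMap ℝ ℂ) 0
    simp only [RingHom.comp_id, map_zero] at this
    rw [← this]; rfl
  ext i j
  simp only [evalM, evalR, Matrix.of_apply, Matrix.map_apply, evalC_def, RatFunc.eval]
  rw [key, key, Complex.ofReal_div]

lemma differentiable_eval₂ (q : ℝ[X]) :
    Differentiable ℂ (fun s : ℂ => q.eval₂ (algebraMap ℝ ℂ) s) := by
  have : (fun s : ℂ => q.eval₂ (algebraMap ℝ ℂ) s) =
      fun s => (q.map (algebraMap ℝ ℂ)).eval s := by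
    ext s; rw [Polynomial.eval_map]
  rw [this]
  exact Polynomial.differentiable _

lemma differentiableAt_evalC {f : RatFunc ℝ} {s : ℂ} (h : ¬ IsPoleAt f s) :
    DifferentiableAt ℂ (evalC f) s := by
  have : evalC f = fun s => f.num.eval₂ (algebraMap ℝ ℂ) s / f.denom.eval₂ (algebraMap ℝ ℂ) s :=
    rfl
  rw [this]
  exact (differentiable_eval₂ _ s).div (differentiable_eval₂ _ s) h

lemma differentiableAt_evalM {G : Matrix (Fin n) (Fin n) (RatFunc ℝ)} {s : ℂ} (h : ¬ HasPole G s)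
    (i j) : DifferentiableAt ℂ (fun s => evalM G s i j) s :=
  differentiableAt_evalC fun hp => h ⟨i, j, hp⟩

lemma continuousAt_evalM {G : Matrix (Fin n) (Fin n) (RatFunc ℝ)} {s : ℂ} (h : ¬ HasPole G s) :
    ContinuousAt (evalM G) s :=
  tendsto_matrix fun i j => (differentiableAt_evalM h i j).continuousAt

lemma tendsto_poly_inf (q : ℝ[X]) (N : ℕ) (hN : q.natDegree ≤ N) :
    Tendsto (fun s : ℂ => q.eval₂ (algebraMap ℝ ℂ) s / s ^ N) (Bornology.cobounded ℂ)
      (𝓝 (q.coeff N : ℂ)) := by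
  have h1 : Tendsto (fun s : ℂ => ∑ i ∈ Finset.range (N + 1), (q.coeff i : ℂ) * (s⁻¹) ^ (N - i))
      (Bornology.cobounded ℂ)
      (𝓝 (∑ i ∈ Finset.range (N + 1), (q.coeff i : ℂ) * 0 ^ (N - i))) :=
    tendsto_finsetSum _ fun i _ => tendsto_const_nhds.mul (tendsto_inv₀_cobounded.pow _)
  have h2 : (∑ i ∈ Finset.range (N + 1), (q.coeff i : ℂ) * 0 ^ (N - i)) = q.coeff N := by
    rw [Finset.sum_range_succ, Finset.sum_eq_zero]
    · simp
    · intro i hi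
      have := Finset.mem_range.1 hi
      rw [zero_pow (by omega), mul_zero]
  rw [h2] at h1
  refine h1.congr' ?_
  filter_upwards [Bornology.le_cofinite ℂ (Set.finite_singleton (0:ℂ)).compl_mem_cofinite] with s hs
  have hs0 : s ≠ 0 := hs
  rw [Polynomial.eval₂_eq_sum_range' _ (Nat.lt_succ_of_le hN), Finset.sum_div]
  refine Finset.sum_congr rfl fun i hi => ?_
  have := Finset.mem_range.1 hi
  obtain ⟨k, rfl⟩ : ∃ k, N = i + k := ⟨N - i, by omega⟩
  have : i + k - i = k := by omega
  rw [this, pow_add, inv_pow]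
  field_simp
  rfl

lemma tendsto_evalC_inf {f : RatFunc ℝ} (h : f.num.degree ≤ f.denom.degree) :
    Tendsto (evalC f) (Bornology.cobounded ℂ) (𝓝 (atInfinity f : ℂ)) := by
  have hd := tendsto_poly_inf f.denom f.denom.natDegree le_rfl
  have hn := tendsto_poly_inf f.num f.denom.natDegree (Polynomial.natDegree_le_natDegree h)
  have hd0 : (f.denom.coeff f.denom.natDegree : ℂ) ≠ 0 := by
    simp [f.denom_ne_zero]
  have h1 := hn.div hd hd0
  have h2 : (f.num.coeff f.denom.natDegree : ℂ) / (f.denom.coeff f.denom.natDegree : ℂ) =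
      (atInfinity f : ℂ) := by
    unfold atInfinity
    split_ifs with hh
    · rw [Complex.ofReal_div, Polynomial.leadingCoeff, Polynomial.leadingCoeff,
        Polynomial.natDegree_eq_of_degree_eq hh]
    · have hlt := lt_of_le_of_ne h hh
      rw [Polynomial.coeff_eq_zero_of_degree_lt]
      · simp
      · rwa [← Polynomial.degree_eq_natDegree f.denom_ne_zero]
  rw [h2] at h1
  refine h1.congr' ?_
  filter_upwards [Bornology.le_cofinite ℂ (Set.finite_singleton (0:ℂ)).compl_mem_cofinite] with s hs
  have hs0 : s ≠ 0 := hs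
  simp only [Pi.div_apply]
  rw [evalC_def, div_div_div_cancel_right₀ (pow_ne_zero _ hs0)]

lemma tendsto_evalM_inf {G : Matrix (Fin n) (Fin n) (RatFunc ℝ)} (h : Proper G) :
    Tendsto (evalM G) (Bornology.cobounded ℂ) (𝓝 ((evalInf G).map Complex.ofReal)) :=
  tendsto_matrix fun i j => tendsto_evalC_inf (h i j)

lemma eventually_mul_denom (f : RatFunc ℝ) :
    ∀ᶠ s in cofinite, f.num.eval₂ (algebraMap ℝ ℂ) s =
      f.denom.eval₂ (algebraMap ℝ ℂ) s * evalC f s := by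
  have : {s : ℂ | IsPoleAt f s}ᶜ ∈ cofinite := (finite_pole f).compl_mem_cofinite
  filter_upwards [this] with s hs
  have hs' : f.denom.eval₂ (algebraMap ℝ ℂ) s ≠ 0 := hs
  rw [evalC_def, mul_div_cancel₀ _ hs']

lemma proper_of_bounded {f : RatFunc ℝ} {l : Filter ℂ} [l.NeBot] (hl : l ≤ Bornology.cobounded ℂ)
    {B : ℝ} (hB : ∀ᶠ s in l, ‖evalC f s‖ ≤ B) : f.num.degree ≤ f.denom.degree := by
  by_contra hlt
  push Not at hlt
  set N := f.num.natDegree with hNd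
  have hnum : f.num ≠ 0 := by
    intro h; rw [h] at hlt; simp at hlt
  have hn := (tendsto_poly_inf f.num N le_rfl).mono_left hl
  have hd := (tendsto_poly_inf f.denom N (Polynomial.natDegree_le_natDegree hlt.le)).mono_left hl
  have h0 : f.denom.coeff N = 0 := by
    apply Polynomial.coeff_eq_zero_of_degree_lt
    rwa [hNd, ← Polynomial.degree_eq_natDegree hnum]
  rw [h0, Complex.ofReal_zero] at hd
  have hz : Tendsto (fun s => f.denom.eval₂ (algebraMap ℝ ℂ) s / s ^ N * evalC f s) l (𝓝 0) := by
    refine hd.zero_mul_isBoundedUnder_le ?_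
    exact ⟨B, by simpa [eventually_map] using hB⟩
  have heq : ∀ᶠ s in l, f.denom.eval₂ (algebraMap ℝ ℂ) s / s ^ N * evalC f s =
      f.num.eval₂ (algebraMap ℝ ℂ) s / s ^ N := by
    filter_upwards [hl (Bornology.le_cofinite ℂ (eventually_mul_denom f))] with s hs
    rw [hs]; ring
  have := tendsto_nhds_unique (hz.congr' heq) hn
  have h3 : f.num.coeff N = 0 := by exact_mod_cast this.symm
  rw [hNd, Polynomial.coeff_natDegree, Polynomial.leadingCoeff_eq_zero] at h3
  exact hnum h3

lemma regular_of_bounded {f : RatFunc ℝ} {s₀ : ℂ} {l : Filter ℂ} [l.NeBot] (hl : l ≤ 𝓝[≠] s₀)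
    {B : ℝ} (hB : ∀ᶠ s in l, ‖evalC f s‖ ≤ B) : ¬ IsPoleAt f s₀ := by
  intro hp
  have hl' : l ≤ 𝓝 s₀ := hl.trans nhdsWithin_le_nhds
  have hn := ((differentiable_eval₂ f.num).continuous.tendsto s₀).mono_left hl'
  have hd := ((differentiable_eval₂ f.denom).continuous.tendsto s₀).mono_left hl'
  have hp' : f.denom.eval₂ (algebraMap ℝ ℂ) s₀ = 0 := hp
  rw [hp'] at hd
  have hz : Tendsto (fun s => f.denom.eval₂ (algebraMap ℝ ℂ) s * evalC f s) l (𝓝 0) := by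
    refine hd.zero_mul_isBoundedUnder_le ?_
    exact ⟨B, by simpa [eventually_map] using hB⟩
  have heq : ∀ᶠ s in l, f.denom.eval₂ (algebraMap ℝ ℂ) s * evalC f s =
      f.num.eval₂ (algebraMap ℝ ℂ) s := by
    filter_upwards [hl (nhdsNE_le_cofinite s₀ (eventually_mul_denom f))] with s hs
    rw [hs]
  have h0 := tendsto_nhds_unique (hz.congr' heq) hn
  obtain ⟨a, b, hab⟩ := f.isCoprime_num_denom
  have := congrArg (fun q => Polynomial.eval₂ (algebraMap ℝ ℂ) s₀ q) hab
  simp only [Polynomial.eval₂_add, Polynomial.eval₂_mul, ← h0, hp', mul_zero, add_zero,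
    Polynomial.eval₂_one] at this
  exact zero_ne_one this

end rat

section nif

lemma tendsto_jw_ne (ω : ℝ) : Tendsto jw (𝓝[≠] ω) (𝓝[≠] (jw ω)) := by
  refine tendsto_nhdsWithin_of_tendsto_nhds_of_eventually_within _
    ((continuous_jw.tendsto ω).mono_left nhdsWithin_le_nhds) ?_
  filter_upwards [self_mem_nhdsWithin] with x hx
  intro h
  have := congrArg Complex.im h
  rw [jw_im, jw_im] at this
  exact hx this

lemma jw_zero : jw 0 = 0 := by simp [jw]

lemma tendsto_jw_zero : Tendsto jw (𝓝[>] 0) (𝓝[≠] 0) := by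
  have := tendsto_jw_ne 0
  rw [jw_zero] at this
  exact this.mono_left (nhdsWithin_mono _ fun x hx => ne_of_gt hx)

lemma axis_of_regular {m : Type*} [Fintype m] {G : ℂ → Matrix m m ℂ} {ω : ℝ}
    (hc : ContinuousAt G (jw ω)) (hn : NIm (G (jw ω))) :
    ∃ R K : Matrix m m ℂ, R.PosSemidef ∧ NIm K ∧
    Tendsto (fun s => G s + (Complex.I / (s - jw ω)) • R) (𝓝[≠] (jw ω)) (𝓝 K) := by
  refine ⟨0, G (jw ω), Matrix.PosSemidef.zero, hn, ?_⟩
  simpa using hc.tendsto.mono_left nhdsWithin_le_nhds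

lemma IsSNI.noPole {C : Matrix (Fin n) (Fin n) (RatFunc ℝ)} (h : IsSNI C) {s : ℂ}
    (hs : 0 ≤ s.re) : ¬ HasPole C s := by
  rintro ⟨i, j, hp⟩
  exact h.1.2 s hs i j hp

lemma IsSNI.nif {C : Matrix (Fin n) (Fin n) (RatFunc ℝ)} (h : IsSNI C) :
    NIF (evalM C) ((evalInf C).map Complex.ofReal) where
  diff s hs := differentiableAt_evalM (h.noPole (le_of_lt hs))
  conj := evalM_conj C
  zero := differentiableAt_evalM (h.noPole (by simp))
  inf := tendsto_evalM_inf h.1.1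
  axis ω hω := axis_of_regular (continuousAt_evalM (h.noPole (by rw [jw_re])))
    (NIm_of_niKer (h.2 ω hω).posSemidef)
  small := by
    filter_upwards [self_mem_nhdsWithin] with ω hω
    exact NIm_of_niKer (h.2 ω hω).posSemidef
  large := by
    filter_upwards [eventually_gt_atTop 0] with ω hω
    exact NIm_of_niKer (h.2 ω hω).posSemidef

lemma IsNI.axis_pole {P : Matrix (Fin n) (Fin n) (RatFunc ℝ)} (h : IsNI P) {ω : ℝ} (hω : 0 < ω)
    (hp : HasPole P (jw ω)) : ∃ R K : Matrix (Fin n) (Fin n) ℂ, R.PosSemidef ∧ NIm K ∧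
    Tendsto (fun s => evalM P s + (Complex.I / (s - jw ω)) • R) (𝓝[≠] (jw ω)) (𝓝 K) := by
  obtain ⟨R, hR, hlim⟩ := h.2.2.2.1 ω hω hp
  set H : ℂ → Matrix (Fin n) (Fin n) ℂ :=
    fun s => evalM P s + (Complex.I / (s - jw ω)) • R with hH
  have hex : ∀ i j, ∃ k, Tendsto (fun s => H s i j) (𝓝[≠] (jw ω)) (𝓝 k) := by
    intro i j
    refine ⟨_, Complex.tendsto_limUnder_of_differentiable_on_punctured_nhds_of_isLittleO ?_ ?_⟩
    · filter_upwards [eventually_noPole P (jw ω), self_mem_nhdsWithin] with s hs hne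
      have hne' : s - jw ω ≠ 0 := sub_ne_zero.2 hne
      simp only [hH, Matrix.add_apply, Matrix.smul_apply, smul_eq_mul]
      refine (differentiableAt_evalM hs i j).add (DifferentiableAt.mul ?_ (differentiableAt_const _))
      exact (differentiableAt_const _).div (differentiableAt_id.sub (differentiableAt_const _)) hne'
    · have hne : ∀ᶠ s in 𝓝[≠] (jw ω), s - jw ω ≠ 0 := by
        filter_upwards [self_mem_nhdsWithin] with s hs using sub_ne_zero.2 hs
      rw [Asymptotics.isLittleO_iff_tendsto' (by
        filter_upwards [hne] with s hs h0
        exact absurd h0 (inv_ne_zero hs))]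
      have h1 : Tendsto (fun s => (s - jw ω) * (Complex.I * evalM P s i j)) (𝓝[≠] (jw ω))
          (𝓝 (R i j)) := by
        have := (tendsto_pi_nhds.1 (tendsto_pi_nhds.1 hlim i)) j
        simpa using this
      have h2 : Tendsto (fun s : ℂ => s - jw ω) (𝓝[≠] (jw ω)) (𝓝 0) := by
        have : Tendsto (fun s : ℂ => s - jw ω) (𝓝 (jw ω)) (𝓝 (jw ω - jw ω)) :=
          (continuous_id.sub continuous_const).tendsto _
        rw [sub_self] at this
        exact this.mono_left nhdsWithin_le_nhds
      have h3 : Tendsto (fun s => -Complex.I * ((s - jw ω) * (Complex.I * evalM P s i j)) +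
          Complex.I * R i j - (s - jw ω) * H (jw ω) i j) (𝓝[≠] (jw ω))
          (𝓝 (-Complex.I * R i j + Complex.I * R i j - 0 * H (jw ω) i j)) :=
        ((h1.const_mul _).add tendsto_const_nhds).sub (h2.mul tendsto_const_nhds)
      have e : -Complex.I * R i j + Complex.I * R i j - 0 * H (jw ω) i j = 0 := by ring
      rw [e] at h3
      refine h3.congr' ?_
      filter_upwards [hne] with s hs
      rw [div_inv_eq_mul]
      have : H s i j = evalM P s i j + Complex.I / (s - jw ω) * R i j := by simp [hH]
      rw [this]
      have e2 : (Complex.I / (s - jw ω) * R i j) * (s - jw ω) = Complex.I * R i j := by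
        field_simp
      have hI : Complex.I * Complex.I = -1 := Complex.I_mul_I
      linear_combination (-(s - jw ω) * evalM P s i j) * hI - e2
  choose K hK using hex
  have hKt : Tendsto H (𝓝[≠] (jw ω)) (𝓝 (Matrix.of K)) := tendsto_matrix fun i j => hK i j
  refine ⟨R, Matrix.of K, hR, ?_, hKt⟩
  refine NIm.of_tendsto (hKt.comp (tendsto_jw_ne ω)) ?_
  have hpos : ∀ᶠ x in 𝓝[≠] ω, 0 < x := (lt_mem_nhds hω).filter_mono nhdsWithin_le_nhds
  filter_upwards [(tendsto_jw_ne ω).eventually (eventually_noPole P (jw ω)), hpos,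
    self_mem_nhdsWithin] with x hx hx0 hxne
  intro v
  simp only [Function.comp, hH]
  rw [qf_add, qf_smul, Complex.add_im]
  have h1 := NIm_of_niKer (h.2.2.1 x hx0 hx) v
  have h2 : Complex.I / (jw x - jw ω) = ((1 / (x - ω) : ℝ) : ℂ) := by
    have : ((x : ℂ) - (ω : ℂ)) ≠ 0 := by
      rw [sub_ne_zero]; exact_mod_cast hxne
    unfold jw
    push_cast
    rw [← mul_sub]
    field_simp
  rw [h2, Complex.im_ofReal_mul, im_zero_of_isHermitian _ hR.1]
  linarith

lemma IsNI.nif {P : Matrix (Fin n) (Fin n) (RatFunc ℝ)} (h : IsNI P) (h0 : ¬ HasPole P 0) :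
    NIF (evalM P) ((evalInf P).map Complex.ofReal) where
  diff s hs := differentiableAt_evalM (h.2.1 s hs)
  conj := evalM_conj P
  zero := differentiableAt_evalM h0
  inf := tendsto_evalM_inf h.1
  axis ω hω := by
    by_cases hp : HasPole P (jw ω)
    · exact h.axis_pole hω hp
    · exact axis_of_regular (continuousAt_evalM hp) (NIm_of_niKer (h.2.2.1 ω hω hp))
  small := by
    filter_upwards [self_mem_nhdsWithin, tendsto_jw_zero.eventually (eventually_noPole P 0)]
      with ω hω hp
    exact NIm_of_niKer (h.2.2.1 ω hω hp)
  large := by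
    filter_upwards [eventually_gt_atTop 0,
      tendsto_jw_cobounded.eventually (eventually_noPole_inf P)] with ω hω hp
    exact NIm_of_niKer (h.2.2.1 ω hω hp)

lemma NIF.near_axis {m : Type*} [Fintype m] {G : ℂ → Matrix m m ℂ} {Ginf : Matrix m m ℂ}
    (h : NIF G Ginf) {ω : ℝ} (hω : 0 < ω) {ε : ℝ} (hε : 0 < ε) :
    ∀ᶠ s in 𝓝[RHP] (jw ω), ∀ u, -ε * ‖u‖ ^ 2 ≤ -(qf (G s) u).im := by
  obtain ⟨R, K, hR, hK, hlim⟩ := h.axis ω hω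
  have h1 := eventually_form (c := 0) hlim (by
    intro x; rw [zero_mul]; linarith [hK x]) hε
  filter_upwards [RHP_nhds_le ω h1, self_mem_nhdsWithin] with s hs hsR u
  have h2 := hs u
  rw [qf_add, qf_smul, Complex.add_im, zero_sub] at h2
  have h3 : 0 ≤ (Complex.I / (s - jw ω) * qf R u).im := by
    have hr : qf R u = (((qf R u).re : ℝ) : ℂ) :=
      Complex.ext (by simp) (by simp [im_zero_of_isHermitian _ hR.1])
    rw [hr, Complex.im_mul_ofReal]
    refine mul_nonneg ?_ (PosSemidef.qf_re hR u)
    have hsre : 0 < s.re := hsR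
    rw [Complex.div_im]
    simp only [Complex.I_im, Complex.I_re, Complex.sub_re, jw_re, one_mul, zero_mul, zero_div,
      sub_zero]
    exact div_nonneg hsre.le (Complex.normSq_nonneg _)
  linarith

end nif

section hom
variable {m : Type*} [Fintype m] [DecidableEq m]

/-- First homotopy parameter. -/
def al (τ : ℝ) : ℝ := max 0 (2 * τ - 1)
/-- Second homotopy parameter. -/
def be (τ : ℝ) : ℝ := min 1 (2 * τ)

/-- The homotopy determinant. -/
def hdet (P0 C0 : Matrix m m ℂ) (τ : ℝ) (X Y : Matrix m m ℂ) : ℂ :=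
  (1 - (P0 + (al τ : ℂ) • (X - P0)) * (C0 + (be τ : ℂ) • (Y - C0))).det

lemma continuous_al : Continuous al := by unfold al; fun_prop
lemma continuous_be : Continuous be := by unfold be; fun_prop

lemma al_nonneg (τ : ℝ) : 0 ≤ al τ := le_max_left _ _
lemma be_nonneg {τ : ℝ} (h : 0 ≤ τ) : 0 ≤ be τ := le_min zero_le_one (by linarith)
lemma al_le_be {τ : ℝ} (h : τ ∈ Set.Icc (0:ℝ) 1) : al τ ≤ be τ :=
  max_le (be_nonneg h.1) (le_min (by linarith [h.2]) (by linarith))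
lemma be_le_one (τ : ℝ) : be τ ≤ 1 := min_le_left _ _

lemma continuous_hdet (P0 C0 : Matrix m m ℂ) :
    Continuous (fun p : (Matrix m m ℂ × Matrix m m ℂ) × ℝ => hdet P0 C0 p.2 p.1.1 p.1.2) := by
  unfold hdet
  have h1 : Continuous fun p : (Matrix m m ℂ × Matrix m m ℂ) × ℝ => (al p.2 : ℂ) :=
    Complex.continuous_ofReal.comp (continuous_al.comp continuous_snd)
  have h2 : Continuous fun p : (Matrix m m ℂ × Matrix m m ℂ) × ℝ => (be p.2 : ℂ) :=
    Complex.continuous_ofReal.comp (continuous_be.comp continuous_snd)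
  have h3 : Continuous fun p : (Matrix m m ℂ × Matrix m m ℂ) × ℝ => p.1.1 :=
    continuous_fst.comp continuous_fst
  have h4 : Continuous fun p : (Matrix m m ℂ × Matrix m m ℂ) × ℝ => p.1.2 :=
    continuous_snd.comp continuous_fst
  exact Continuous.matrix_det (continuous_const.sub
    ((continuous_const.add (h1.smul (h3.sub continuous_const))).matrix_mul
      (continuous_const.add (h2.smul (h4.sub continuous_const)))))

lemma hdet_eventually (P0 C0 X0 Y0 : Matrix m m ℂ) {ι : Type*} {l : Filter ι}
    {X Y : ι → Matrix m m ℂ} (hX : Tendsto X l (𝓝 X0)) (hY : Tendsto Y l (𝓝 Y0))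
    (h : ∀ τ ∈ Set.Icc (0:ℝ) 1, hdet P0 C0 τ X0 Y0 ≠ 0) :
    ∀ᶠ i in l, ∀ τ ∈ Set.Icc (0:ℝ) 1, hdet P0 C0 τ (X i) (Y i) ≠ 0 := by
  have h1 : ∀ᶠ Z in 𝓝 (X0, Y0), ∀ τ ∈ Set.Icc (0:ℝ) 1, hdet P0 C0 τ Z.1 Z.2 ≠ 0 := by
    refine isCompact_Icc.eventually_forall_of_forall_eventually fun τ hτ => ?_
    have := (continuous_hdet P0 C0).continuousAt (x := ((X0, Y0), τ))
    exact this.eventually_ne (h τ hτ)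
  exact (hX.prodMk_nhds hY).eventually h1

lemma differentiableAt_det {F : ℂ → Matrix m m ℂ} {s : ℂ}
    (h : ∀ i j, DifferentiableAt ℂ (fun s => F s i j) s) :
    DifferentiableAt ℂ (fun s => (F s).det) s := by
  simp only [det_apply']
  refine DifferentiableAt.fun_sum fun σ _ => (differentiableAt_const _).mul ?_
  exact DifferentiableAt.fun_finsetProd fun i _ => h _ _

lemma C_near {C : ℂ → Matrix m m ℂ} {s₀ : ℂ} (hc : ContinuousAt C s₀)
    (hn : ∀ x, x ≠ 0 → (qf (C s₀) x).im < 0) :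
    ∃ c > 0, ∃ K ≥ 0, ∀ᶠ s in 𝓝 s₀, (∀ x, c * ‖x‖ ^ 2 ≤ -(qf (C s) x).im) ∧ nrm (C s) ≤ K := by
  obtain ⟨c, hc0, hcx⟩ := exists_form_bound _ hn
  refine ⟨c / 2, by positivity, nrm (C s₀) + 1, by linarith [nrm_nonneg (C s₀)], ?_⟩
  have h1 := eventually_form hc.tendsto hcx (half_pos hc0)
  have h2 : ∀ᶠ s in 𝓝 s₀, nrm (C s) < nrm (C s₀) + 1 :=
    ((continuous_nrm.tendsto _).comp hc.tendsto).eventually (gt_mem_nhds (by linarith))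
  filter_upwards [h1, h2] with s a b
  refine ⟨fun x => ?_, b.le⟩
  have := a x
  rwa [sub_half] at this

lemma hdet_const (P0 C0 : Matrix m m ℂ) (τ : ℝ) : hdet P0 C0 τ P0 C0 = (1 - P0 * C0).det := by
  simp [hdet]

lemma hdet_zero (P0 C0 X Y : Matrix m m ℂ) : hdet P0 C0 0 X Y = (1 - P0 * C0).det := by
  simp [hdet, al, be]

lemma hdet_one (P0 C0 X Y : Matrix m m ℂ) : hdet P0 C0 1 X Y = (1 - X * Y).det := by
  have h1 : al 1 = 1 := by norm_num [al]
  have h2 : be 1 = 1 := by norm_num [be]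
  simp [hdet, h1, h2]

lemma hdet_conj (P0 C0 X Y : Matrix m m ℂ) (τ : ℝ) (hP : P0.map (starRingEnd ℂ) = P0)
    (hC : C0.map (starRingEnd ℂ) = C0) :
    hdet P0 C0 τ (X.map (starRingEnd ℂ)) (Y.map (starRingEnd ℂ)) =
      (starRingEnd ℂ) (hdet P0 C0 τ X Y) := by
  have key : ∀ (a : ℝ) (Z Z0 : Matrix m m ℂ), Z0.map (starRingEnd ℂ) = Z0 →
      Z0 + (a : ℂ) • (Z.map (starRingEnd ℂ) - Z0) =
      (Z0 + (a : ℂ) • (Z - Z0)).map (starRingEnd ℂ) := by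
    intro a Z Z0 hZ
    ext i j
    have := congrFun (congrFun hZ i) j
    simp only [Matrix.map_apply] at this
    simp [this]
  unfold hdet
  rw [key _ _ _ hP, key _ _ _ hC, RingHom.map_det]
  simp only [RingHom.mapMatrix_apply]
  congr 1
  have := map_sub (starRingEnd ℂ).mapMatrix 1 
    ((P0 + (al τ : ℂ) • (X - P0)) * (C0 + (be τ : ℂ) • (Y - C0)))
  rw [map_one, map_mul] at this
  exact this.symm

lemma hdet_axis (P0 C0 X Y : Matrix m m ℂ) {τ : ℝ} (hτ : τ ∈ Set.Icc (0:ℝ) 1)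
    (hP0 : ∀ x, (qf P0 x).im = 0) (hC0 : ∀ x, (qf C0 x).im = 0) {c K ε : ℝ}
    (hK : 0 ≤ K) (hε : 0 ≤ ε) (hεc : ε * (2 * nrm C0 + K) ^ 2 < c)
    (h0 : (1 - P0 * C0).det ≠ 0)
    (hX : ∀ x, -ε * ‖x‖ ^ 2 ≤ -(qf X x).im) (hY : ∀ x, c * ‖x‖ ^ 2 ≤ -(qf Y x).im)
    (hYK : nrm Y ≤ K) : hdet P0 C0 τ X Y ≠ 0 := by
  intro hdet0
  have ha := al_nonneg τ
  have hb := be_nonneg hτ.1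
  have hab := al_le_be hτ
  have hb1 := be_le_one τ
  rcases eq_or_lt_of_le hb with hb0 | hb0
  · have ha0 : al τ = 0 := by linarith
    unfold hdet at hdet0
    rw [← hb0, ha0] at hdet0
    simp at hdet0
    exact h0 hdet0
  obtain ⟨v, hv, hv0⟩ := exists_mulVec_eq_zero_iff.2 hdet0
  set A := P0 + (al τ : ℂ) • (X - P0) with hA
  set B := C0 + (be τ : ℂ) • (Y - C0) with hB
  rw [sub_mulVec, one_mulVec, sub_eq_zero, ← mulVec_mulVec] at hv0
  have hAf : ∀ x, (qf A x).im = al τ * (qf X x).im := by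
    intro x
    rw [hA, qf_add, qf_smul, qf_sub, Complex.add_im, Complex.im_ofReal_mul, Complex.sub_im, hP0]
    ring
  have hBf : ∀ x, (qf B x).im = be τ * (qf Y x).im := by
    intro x
    rw [hB, qf_add, qf_smul, qf_sub, Complex.add_im, Complex.im_ofReal_mul, Complex.sub_im, hC0]
    ring
  have hen := energy A B (B *ᵥ v) v 0 0 (be τ * c) (al τ * ε)
    (fun x => by rw [hBf]; nlinarith [mul_le_mul_of_nonneg_left (hY x) hb])
    (fun x => by rw [hAf]; nlinarith [mul_le_mul_of_nonneg_left (hX x) ha])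
    (by simp) (by simpa using hv0)
  simp only [norm_zero, mul_zero, add_zero] at hen
  have hBv : ‖B *ᵥ v‖ ≤ (2 * nrm C0 + K) * ‖v‖ := by
    have e : B *ᵥ v = C0 *ᵥ v + (be τ : ℂ) • (Y *ᵥ v - C0 *ᵥ v) := by
      rw [hB, add_mulVec, smul_mulVec, sub_mulVec]
    have n1 := norm_mulVec_le C0 v
    have n2 := norm_mulVec_le Y v
    have n3 : nrm Y * ‖v‖ ≤ K * ‖v‖ := by gcongr
    have n4 : ‖(be τ : ℂ) • (Y *ᵥ v - C0 *ᵥ v)‖ ≤ ‖Y *ᵥ v - C0 *ᵥ v‖ := by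
      rw [norm_smul, Complex.norm_real, Real.norm_of_nonneg hb]
      exact mul_le_of_le_one_left (norm_nonneg _) hb1
    rw [e]
    calc _ ≤ _ := norm_add_le _ _
      _ ≤ ‖C0 *ᵥ v‖ + (‖Y *ᵥ v‖ + ‖C0 *ᵥ v‖) := by gcongr; exact n4.trans (norm_sub_le _ _)
      _ ≤ _ := by nlinarith
  have hvpos : 0 < ‖v‖ := norm_pos_iff.2 hv
  have h1 : ‖B *ᵥ v‖ ^ 2 ≤ (2 * nrm C0 + K) ^ 2 * ‖v‖ ^ 2 := by
    rw [← mul_pow]; gcongr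
  have h2 : al τ * ε * ‖B *ᵥ v‖ ^ 2 ≤ be τ * ε * ((2 * nrm C0 + K) ^ 2 * ‖v‖ ^ 2) := by
    gcongr
  have h3 : be τ * (ε * (2 * nrm C0 + K) ^ 2) * ‖v‖ ^ 2 < be τ * c * ‖v‖ ^ 2 := by
    gcongr
  nlinarith

lemma homotopy_nonsing {P C : ℂ → Matrix m m ℂ} {Pinf Cinf : Matrix m m ℂ}
    (hP : NIF P Pinf) (hC : NIF C Cinf)
    (hCc : ∀ ω : ℝ, 0 < ω → ContinuousAt C (jw ω))
    (hCs : ∀ ω : ℝ, 0 < ω → ∀ x, x ≠ 0 → (qf (C (jw ω)) x).im < 0)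
    (hb : ∀ t ∈ Set.Icc (0:ℝ) 1, (1 - (Pinf + (t : ℂ) • (P 0 - Pinf)) * Cinf).det ≠ 0)
    (hc : ∀ t ∈ Set.Icc (0:ℝ) 1, (1 - (Cinf + (t : ℂ) • (C 0 - Cinf)) * P 0).det ≠ 0) :
    ∀ s ∈ RHP, (1 - P s * C s).det ≠ 0 := by
  have h0 : (1 - P 0 * C 0).det ≠ 0 := by
    have := hc 1 (by simp)
    rw [det_sub_mul_comm]
    simpa using this
  have hP0r : (P 0).map (starRingEnd ℂ) = P 0 := by
    have := hP.conj 0; simp at this; exact this.symm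
  have hC0r : (C 0).map (starRingEnd ℂ) = C 0 := by
    have := hC.conj 0; simp at this; exact this.symm
  have hpos : ∀ ω : ℝ, 0 < ω → ∀ᶠ s in 𝓝[RHP] (jw ω), ∀ τ ∈ Set.Icc (0:ℝ) 1,
      hdet (P 0) (C 0) τ (P s) (C s) ≠ 0 := by
    intro ω hω
    obtain ⟨c, hc0, K, hK, hev⟩ := C_near (hCc ω hω) (hCs ω hω)
    set L := (2 * nrm (C 0) + K) ^ 2 with hL
    have hL0 : 0 ≤ L := sq_nonneg _
    have hε : 0 < c / (L + 1) := by positivity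
    have hεc : c / (L + 1) * L < c := by
      rw [div_mul_eq_mul_div, div_lt_iff₀ (by positivity)]
      nlinarith
    filter_upwards [hP.near_axis hω hε, hev.filter_mono nhdsWithin_le_nhds] with s h1 h2 τ hτ
    exact hdet_axis _ _ _ _ hτ hP.zero_im hC.zero_im hK hε.le hεc h0 h1 h2.1 h2.2
  have key := homotopy_principle (fun τ s => hdet (P 0) (C 0) τ (P s) (C s)) ?_ ?_ ?_ ?_ ?_ 1
    (by simp)
  · intro s hs
    have := key s hs
    rwa [hdet_one] at this
  · intro p hp
    have hs : p.2 ∈ RHP := hp.2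
    have h1 : ContinuousAt (fun p : ℝ × ℂ => ((P p.2, C p.2), p.1)) p :=
      (((hP.continuousAt (Or.inl hs)).comp continuousAt_snd).prodMk
        ((hC.continuousAt (Or.inl hs)).comp continuousAt_snd)).prodMk continuousAt_fst
    exact ((continuous_hdet (P 0) (C 0)).continuousAt.comp h1).continuousWithinAt
  · intro τ hτ s hs
    refine (differentiableAt_det fun i j => ?_).differentiableWithinAt
    simp only [Matrix.sub_apply, Matrix.mul_apply, Matrix.add_apply, Matrix.smul_apply, smul_eq_mul]
    refine (differentiableAt_const _).sub (DifferentiableAt.fun_sum fun k _ => ?_)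
    refine DifferentiableAt.mul ?_ ?_
    · exact (differentiableAt_const _).add ((differentiableAt_const _).mul
        ((hP.diff s hs _ _).sub (differentiableAt_const _)))
    · exact (differentiableAt_const _).add ((differentiableAt_const _).mul
        ((hC.diff s hs _ _).sub (differentiableAt_const _)))
  · intro ω
    rcases lt_trichotomy ω 0 with hω | rfl | hω
    · have := (tendsto_conj_RHP ω).eventually (hpos (-ω) (by linarith))
      filter_upwards [this] with s hs τ hτ h
      apply hs τ hτ
      rw [hP.conj, hC.conj, hdet_conj _ _ _ _ _ hP0r hC0r, h, map_zero]
    · rw [jw_zero]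
      refine (hdet_eventually (P 0) (C 0) (P 0) (C 0) (hP.continuousAt (Or.inr rfl)).tendsto
        (hC.continuousAt (Or.inr rfl)).tendsto ?_).filter_mono nhdsWithin_le_nhds
      intro τ _
      rwa [hdet_const]
    · exact hpos ω hω
  · refine (hdet_eventually (P 0) (C 0) Pinf Cinf hP.inf hC.inf ?_).mono fun s hs _ => hs
    intro τ hτ
    rcases le_total τ (1/2) with h | h
    · have ha : al τ = 0 := by rw [al, max_eq_left]; linarith
      have hbe : be τ = 2 * τ := by rw [be, min_eq_right]; linarith
      have := hc (1 - 2 * τ) ⟨by linarith, by linarith [hτ.1]⟩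
      unfold hdet
      rw [ha, hbe, det_sub_mul_comm]
      convert this using 4
      · push_cast; module
      · simp
    · have ha : al τ = 2 * τ - 1 := by rw [al, max_eq_right]; linarith
      have hbe : be τ = 1 := by rw [be, min_eq_left]; linarith
      have := hb (2 - 2 * τ) ⟨by linarith [hτ.2], by linarith [hτ.1]⟩
      unfold hdet
      rw [ha, hbe]
      convert this using 4
      · push_cast; module
      · simp
  · intro s _
    rwa [hdet_zero]

end hom

section suff
variable {m : Type*} [Fintype m] [DecidableEq m]

/-- Eventually bounded entries. -/
def EvB (l : Filter ℂ) (F : ℂ → Matrix m m ℂ) : Prop := ∃ B, ∀ᶠ s in l, ∀ i j, ‖F s i j‖ ≤ B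

lemma EvB.of_tendsto {l : Filter ℂ} {F : ℂ → Matrix m m ℂ} {L : Matrix m m ℂ}
    (h : Tendsto F l (𝓝 L)) : EvB l F := by
  refine ⟨nrm L + 1, ?_⟩
  have h2 : ∀ᶠ s in l, nrm (F s) < nrm L + 1 :=
    ((continuous_nrm.tendsto _).comp h).eventually (gt_mem_nhds (by linarith))
  filter_upwards [h2] with s hs i j
  refine le_trans ?_ hs.le
  unfold nrm
  refine le_trans ?_ (Finset.single_le_sum (f := fun i => ∑ j, ‖F s i j‖)
    (fun i _ => Finset.sum_nonneg fun j _ => norm_nonneg _) (Finset.mem_univ i))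
  exact Finset.single_le_sum (f := fun j => ‖F s i j‖) (fun j _ => norm_nonneg _)
    (Finset.mem_univ j)

lemma EvB.congr {l : Filter ℂ} {F G : ℂ → Matrix m m ℂ} (h : EvB l F)
    (he : ∀ᶠ s in l, G s = F s) : EvB l G := by
  obtain ⟨B, hB⟩ := h
  refine ⟨B, ?_⟩
  filter_upwards [hB, he] with s h1 h2
  rwa [h2]

lemma continuousAt_inv {A : Matrix m m ℂ} (h : A.det ≠ 0) :
    ContinuousAt (fun M : Matrix m m ℂ => M⁻¹) A := by
  have : (fun M : Matrix m m ℂ => M⁻¹) = fun M => (M.det)⁻¹ • M.adjugate := by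
    ext1 M
    rw [Matrix.inv_def, Ring.inverse_eq_inv']
  rw [this]
  exact ((Continuous.matrix_det continuous_id).continuousAt.inv₀ h).smul
    (Continuous.matrix_adjugate continuous_id).continuousAt

lemma entry_le {A : Matrix m m ℂ} {M : ℝ} (h : ∀ w, ‖A *ᵥ w‖ ≤ M * ‖w‖) (i j : m) :
    ‖A i j‖ ≤ M := by
  have h1 := h (Pi.single j 1)
  rw [Matrix.mulVec_single_one] at h1
  have h2 : ‖(Pi.single j 1 : m → ℂ)‖ = 1 := by rw [Pi.norm_single]; simp
  rw [h2, mul_one] at h1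
  exact (norm_le_pi_norm (A.col j) i).trans h1

lemma cl_bound {P C V : Matrix m m ℂ} (hV : (1 - P * C) * V = 1) {c K ε : ℝ} (hc : 0 < c)
    (hK : 0 ≤ K) (hε : 0 ≤ ε) (hsmall : 4 * ε * K ^ 2 ≤ c)
    (hC : ∀ x, c * ‖x‖ ^ 2 ≤ -(qf C x).im) (hP : ∀ x, -ε * ‖x‖ ^ 2 ≤ -(qf P x).im)
    (hCK : nrm C ≤ K) (w1 w2 : m → ℂ) {W : ℝ} (h1 : ‖w1‖ ≤ W) (h2 : ‖w2‖ ≤ W) :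
    ‖V *ᵥ (w2 + P *ᵥ w1)‖ ≤ (1 + 2 / c * (2 * ε + Fintype.card m * (2 + K))) * W := by
  set v := V *ᵥ (w2 + P *ᵥ w1) with hv
  set u := C *ᵥ v + w1 with hu
  have hvu : v = P *ᵥ u + w2 := by
    have : (1 - P * C) *ᵥ v = w2 + P *ᵥ w1 := by rw [hv, mulVec_mulVec, hV, one_mulVec]
    rw [sub_mulVec, one_mulVec, ← mulVec_mulVec, sub_eq_iff_eq_add] at this
    rw [hu, mulVec_add]
    conv_lhs => rw [this]
    abel
  have hen := energy P C u v w1 w2 c ε hC hP hu hvu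
  have hCv : ‖C *ᵥ v‖ ≤ K * ‖v‖ := (norm_mulVec_le C v).trans (by gcongr)
  have hU : ‖u‖ ≤ K * ‖v‖ + W := by
    rw [hu]; exact (norm_add_le _ _).trans (add_le_add hCv h1)
  refine quad_bound hc hε hK (Nat.cast_nonneg _) (norm_nonneg v) ((norm_nonneg _).trans h1)
    (norm_nonneg u) hsmall hU (hen.trans ?_)
  gcongr

/-- The closed-loop blocks are bounded near positive imaginary axis points. -/
lemma cl_axis {P C : ℂ → Matrix m m ℂ} {Pinf : Matrix m m ℂ} (hP : NIF P Pinf) {ω : ℝ} (hω : 0 < ω)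
    (hCc : ContinuousAt C (jw ω)) (hCs : ∀ x, x ≠ 0 → (qf (C (jw ω)) x).im < 0)
    (hdet : ∀ s ∈ RHP, (1 - P s * C s).det ≠ 0) :
    EvB (𝓝[RHP] (jw ω)) (fun s => (1 - P s * C s)⁻¹) ∧
    EvB (𝓝[RHP] (jw ω)) (fun s => (1 - P s * C s)⁻¹ * P s) ∧
    EvB (𝓝[RHP] (jw ω)) (fun s => C s * (1 - P s * C s)⁻¹) ∧
    EvB (𝓝[RHP] (jw ω)) (fun s => C s * (1 - P s * C s)⁻¹ * P s) := by
  obtain ⟨c, hc0, K, hK, hev⟩ := C_near hCc hCs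
  set ε := c / (4 * (K ^ 2 + 1)) with hεd
  have hε : 0 < ε := by positivity
  have hsmall : 4 * ε * K ^ 2 ≤ c := by
    have : 4 * ε * K ^ 2 = c * (K ^ 2 / (K ^ 2 + 1)) := by rw [hεd]; field_simp
    rw [this]
    have : K ^ 2 / (K ^ 2 + 1) ≤ 1 := by
      rw [div_le_one (by positivity)]; linarith
    nlinarith
  set M := 1 + 2 / c * (2 * ε + Fintype.card m * (2 + K)) with hM
  have hM0 : 0 ≤ M := by positivity
  have main : ∀ᶠ s in 𝓝[RHP] (jw ω), nrm (C s) ≤ K ∧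
      (∀ w, ‖(1 - P s * C s)⁻¹ *ᵥ w‖ ≤ M * ‖w‖) ∧
      (∀ w, ‖((1 - P s * C s)⁻¹ * P s) *ᵥ w‖ ≤ M * ‖w‖) := by
    filter_upwards [hP.near_axis hω hε, hev.filter_mono nhdsWithin_le_nhds, self_mem_nhdsWithin]
      with s h1 h2 hs
    have hV := Matrix.mul_nonsing_inv _ (isUnit_iff_ne_zero.2 (hdet s hs))
    have hb := fun w1 w2 W => cl_bound hV hc0 hK hε.le hsmall h2.1 h1 h2.2 w1 w2 (W := W)
    refine ⟨h2.2, fun w => ?_, fun w => ?_⟩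
    · have := hb 0 w ‖w‖ (by simp) le_rfl
      simpa using this
    · have := hb w 0 ‖w‖ le_rfl (by simp)
      rw [zero_add, mulVec_mulVec] at this
      exact this
  have hmul : ∀ (Cs A : Matrix m m ℂ), nrm Cs ≤ K → (∀ w, ‖A *ᵥ w‖ ≤ M * ‖w‖) →
      ∀ i j, ‖(Cs * A) i j‖ ≤ K * M := by
    intro Cs A hCs hA
    refine entry_le fun w => ?_
    rw [← mulVec_mulVec]
    calc _ ≤ nrm Cs * ‖A *ᵥ w‖ := norm_mulVec_le _ _
      _ ≤ K * (M * ‖w‖) := by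
        gcongr
        exact hA w
      _ = _ := by ring
  refine ⟨⟨M, ?_⟩, ⟨M, ?_⟩, ⟨K * M, ?_⟩, ⟨K * M, ?_⟩⟩
  · filter_upwards [main] with s hs using entry_le hs.2.1
  · filter_upwards [main] with s hs using entry_le hs.2.2
  · filter_upwards [main] with s hs using hmul _ _ hs.1 hs.2.1
  · filter_upwards [main] with s hs
    rw [mul_assoc]
    exact hmul _ _ hs.1 hs.2.2

lemma cl_tendsto {P C : ℂ → Matrix m m ℂ} {P1 C1 : Matrix m m ℂ} {l : Filter ℂ}
    (hP : Tendsto P l (𝓝 P1)) (hC : Tendsto C l (𝓝 C1)) (hdet : (1 - P1 * C1).det ≠ 0) :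
    EvB l (fun s => (1 - P s * C s)⁻¹) ∧
    EvB l (fun s => (1 - P s * C s)⁻¹ * P s) ∧
    EvB l (fun s => C s * (1 - P s * C s)⁻¹) ∧
    EvB l (fun s => C s * (1 - P s * C s)⁻¹ * P s) := by
  have h1 : Tendsto (fun s => 1 - P s * C s) l (𝓝 (1 - P1 * C1)) :=
    tendsto_const_nhds.sub (hP.mul hC)
  have h2 : Tendsto (fun s => (1 - P s * C s)⁻¹) l (𝓝 (1 - P1 * C1)⁻¹) :=
    (continuousAt_inv hdet).tendsto.comp h1
  exact ⟨EvB.of_tendsto h2, EvB.of_tendsto (h2.mul hP), EvB.of_tendsto (hC.mul h2),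
    EvB.of_tendsto ((hC.mul h2).mul hP)⟩

lemma EvB.mono {l l' : Filter ℂ} {F : ℂ → Matrix m m ℂ} (h : EvB l F) (hl : l' ≤ l) : EvB l' F := by
  obtain ⟨B, hB⟩ := h
  exact ⟨B, hl hB⟩

lemma isPoleAt_conj (f : RatFunc ℝ) (s : ℂ) : IsPoleAt f ((starRingEnd ℂ) s) ↔ IsPoleAt f s := by
  unfold IsPoleAt
  rw [eval₂_conj]
  simp

instance cobounded_neBot : (Bornology.cobounded ℂ).NeBot := inferInstance

lemma block_mem {G : Matrix (Fin n) (Fin n) (RatFunc ℝ)}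
    (h : ∀ s₀ : ℂ, 0 ≤ s₀.re → 0 ≤ s₀.im → EvB (𝓝[RHP \ {s₀}] s₀) (evalM G))
    (hinf : EvB (Bornology.cobounded ℂ ⊓ 𝓟 RHP) (evalM G)) (i j : Fin n) :
    (G i j).num.degree ≤ (G i j).denom.degree ∧ ∀ s : ℂ, 0 ≤ s.re → ¬ IsPoleAt (G i j) s := by
  constructor
  · obtain ⟨B, hB⟩ := hinf
    have hne : (Bornology.cobounded ℂ ⊓ 𝓟 RHP).NeBot := by
      refine NeBot.mono (inferInstance : (map (fun x : ℝ => (x : ℂ)) atTop).NeBot) ?_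
      refine le_inf tendsto_ofReal_cobounded ?_
      rw [le_principal_iff, mem_map]
      filter_upwards [eventually_gt_atTop 0] with x hx
      simpa [RHP] using hx
    exact proper_of_bounded (l := Bornology.cobounded ℂ ⊓ 𝓟 RHP) inf_le_left
      (hB.mono fun s hs => hs i j)
  · have key : ∀ s : ℂ, 0 ≤ s.re → 0 ≤ s.im → ¬ IsPoleAt (G i j) s := by
      intro s hs hs'
      obtain ⟨B, hB⟩ := h s hs hs'
      have := neBot_punct hs
      refine regular_of_bounded (l := 𝓝[RHP \ {s}] s) (nhdsWithin_mono _ fun x hx => hx.2)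
        (hB.mono fun s hs => hs i j)
    intro s hs
    rcases le_total 0 s.im with h1 | h1
    · exact key s hs h1
    · rw [← isPoleAt_conj]
      exact key _ (by simpa using hs) (by simpa using h1)

end suff

lemma sufficiency {P C : Matrix (Fin n) (Fin n) (RatFunc ℝ)} (hP : IsNI P) (hP0 : ¬ HasPole P 0)
    (hC : IsSNI C) {Pinf Cinf : Matrix (Fin n) (Fin n) ℂ} (hPn : NIF (evalM P) Pinf)
    (hCn : NIF (evalM C) Cinf)
    (hb : ∀ t ∈ Set.Icc (0:ℝ) 1, (1 - (Pinf + (t : ℂ) • (evalM P 0 - Pinf)) * Cinf).det ≠ 0)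
    (hc : ∀ t ∈ Set.Icc (0:ℝ) 1,
      (1 - (Cinf + (t : ℂ) • (evalM C 0 - Cinf)) * evalM P 0).det ≠ 0) :
    FeedbackStable P C := by
  have hCc : ∀ ω : ℝ, 0 < ω → ContinuousAt (evalM C) (jw ω) := fun ω _ =>
    continuousAt_evalM (hC.noPole (by rw [jw_re]))
  have hCs : ∀ ω : ℝ, 0 < ω → ∀ x, x ≠ 0 → (qf (evalM C (jw ω)) x).im < 0 := fun ω hω x hx =>
    SNIm_of_niKer (hC.2 ω hω) x hx
  have hdet := homotopy_nonsing hPn hCn hCc hCs hb hc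
  have hdet0 : (1 - evalM P 0 * evalM C 0).det ≠ 0 := by
    have := hc 1 (by simp)
    rw [det_sub_mul_comm]
    simpa using this
  have hdetinf : (1 - Pinf * Cinf).det ≠ 0 := by
    have := hb 0 (by simp)
    simpa using this
  have h1R : (1 : ℂ) ∈ RHP := by simp [RHP]
  have hPr : ∀ s ∈ RHP, ¬ HasPole P s := fun s hs => hP.2.1 s hs
  have hCr : ∀ s ∈ RHP, ¬ HasPole C s := fun s hs => hC.noPole (le_of_lt hs)
  have hev : ∀ s, ¬ HasPole P s → ¬ HasPole C s → ¬ HasPole (1 - P * C) s ∧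
      evalM (1 - P * C) s = 1 - evalM P s * evalM C s := by
    intro s h1 h2
    have a := evalM_mul h1 h2
    have b := evalM_sub (evalM_one s).1 a.1
    refine ⟨b.1, ?_⟩
    rw [b.2, a.2, (evalM_one s).2]
  have hdetR : (1 - P * C).det ≠ 0 := by
    intro h
    have a := hev 1 (hPr 1 h1R) (hCr 1 h1R)
    have b := evalC_det a.1
    rw [h, a.2] at b
    exact hdet 1 h1R (by rw [← b]; simp [evalC])
  have hVr : (1 - P * C) * (1 - P * C)⁻¹ = 1 :=
    Matrix.mul_nonsing_inv _ (isUnit_iff_ne_zero.2 hdetR)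
  set V := (1 - P * C)⁻¹ with hV
  have hVev : ∀ s ∈ RHP, ¬ HasPole V s → evalM V s = (1 - evalM P s * evalM C s)⁻¹ ∧
      evalM (V * P) s = (1 - evalM P s * evalM C s)⁻¹ * evalM P s ∧
      evalM (C * V) s = evalM C s * (1 - evalM P s * evalM C s)⁻¹ ∧
      evalM (C * V * P) s = evalM C s * (1 - evalM P s * evalM C s)⁻¹ * evalM P s := by
    intro s hs hv
    have a := hev s (hPr s hs) (hCr s hs)
    have b := evalM_mul a.1 hv
    have e : evalM V s = (1 - evalM P s * evalM C s)⁻¹ := by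
      rw [hVr, (evalM_one s).2, a.2] at b
      exact (Matrix.inv_eq_right_inv b.2.symm).symm
    have d := evalM_mul (hCr s hs) hv
    refine ⟨e, ?_, ?_, ?_⟩
    · rw [(evalM_mul hv (hPr s hs)).2, e]
    · rw [d.2, e]
    · rw [(evalM_mul d.1 (hPr s hs)).2, d.2, e]
  have hloc : ∀ s₀ : ℂ, 0 ≤ s₀.re → 0 ≤ s₀.im →
      EvB (𝓝[RHP \ {s₀}] s₀) (evalM V) ∧ EvB (𝓝[RHP \ {s₀}] s₀) (evalM (V * P)) ∧
      EvB (𝓝[RHP \ {s₀}] s₀) (evalM (C * V)) ∧ EvB (𝓝[RHP \ {s₀}] s₀) (evalM (C * V * P)) := by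
    intro s₀ hre him
    have hgen : ∀ᶠ s in 𝓝[RHP \ {s₀}] s₀, s ∈ RHP ∧ ¬ HasPole V s := by
      have h1 : 𝓝[RHP \ {s₀}] s₀ ≤ 𝓝[≠] s₀ := nhdsWithin_mono _ fun x hx => hx.2
      filter_upwards [h1 (eventually_noPole V s₀), self_mem_nhdsWithin] with s a b
      exact ⟨b.1, a⟩
    have main : EvB (𝓝[RHP \ {s₀}] s₀) (fun s => (1 - evalM P s * evalM C s)⁻¹) ∧
        EvB (𝓝[RHP \ {s₀}] s₀) (fun s => (1 - evalM P s * evalM C s)⁻¹ * evalM P s) ∧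
        EvB (𝓝[RHP \ {s₀}] s₀) (fun s => evalM C s * (1 - evalM P s * evalM C s)⁻¹) ∧
        EvB (𝓝[RHP \ {s₀}] s₀)
          (fun s => evalM C s * (1 - evalM P s * evalM C s)⁻¹ * evalM P s) := by
      by_cases hs : s₀ ∈ RHP ∨ s₀ = 0
      · refine cl_tendsto ((hPn.continuousAt hs).tendsto.mono_left nhdsWithin_le_nhds)
          ((hCn.continuousAt hs).tendsto.mono_left nhdsWithin_le_nhds) ?_
        rcases hs with hs | rfl
        · exact hdet _ hs
        · exact hdet0
      · push Not at hs
        have hre0 : s₀.re = 0 := le_antisymm (not_lt.1 hs.1) hre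
        have hj := eq_jw hre0
        have hpos : 0 < s₀.im := by
          refine lt_of_le_of_ne him fun h => hs.2 ?_
          rw [hj, ← h, jw_zero]
        have hle : 𝓝[RHP \ {s₀}] s₀ ≤ 𝓝[RHP] (jw s₀.im) := by
          rw [← hj]; exact nhdsWithin_mono _ Set.sdiff_subset
        have := cl_axis hPn hpos (hCc _ hpos) (hCs _ hpos) hdet
        exact ⟨this.1.mono hle, this.2.1.mono hle, this.2.2.1.mono hle, this.2.2.2.mono hle⟩
    exact ⟨main.1.congr (hgen.mono fun s hs => (hVev s hs.1 hs.2).1),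
      main.2.1.congr (hgen.mono fun s hs => (hVev s hs.1 hs.2).2.1),
      main.2.2.1.congr (hgen.mono fun s hs => (hVev s hs.1 hs.2).2.2.1),
      main.2.2.2.congr (hgen.mono fun s hs => (hVev s hs.1 hs.2).2.2.2)⟩
  have hinf : EvB (Bornology.cobounded ℂ ⊓ 𝓟 RHP) (evalM V) ∧
      EvB (Bornology.cobounded ℂ ⊓ 𝓟 RHP) (evalM (V * P)) ∧
      EvB (Bornology.cobounded ℂ ⊓ 𝓟 RHP) (evalM (C * V)) ∧
      EvB (Bornology.cobounded ℂ ⊓ 𝓟 RHP) (evalM (C * V * P)) := by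
    have hgen : ∀ᶠ s in Bornology.cobounded ℂ ⊓ 𝓟 RHP, s ∈ RHP ∧ ¬ HasPole V s := by
      have h1 : ∀ᶠ s in Bornology.cobounded ℂ ⊓ 𝓟 RHP, s ∈ RHP :=
        inf_le_right (a := Bornology.cobounded ℂ) (mem_principal_self RHP)
      have h2 : ∀ᶠ s in Bornology.cobounded ℂ ⊓ 𝓟 RHP, ¬ HasPole V s :=
        inf_le_left (b := 𝓟 RHP) (eventually_noPole_inf V)
      exact h1.and h2
    have main := cl_tendsto (l := Bornology.cobounded ℂ ⊓ 𝓟 RHP)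
      (hPn.inf.mono_left inf_le_left) (hCn.inf.mono_left inf_le_left) hdetinf
    exact ⟨main.1.congr (hgen.mono fun s hs => (hVev s hs.1 hs.2).1),
      main.2.1.congr (hgen.mono fun s hs => (hVev s hs.1 hs.2).2.1),
      main.2.2.1.congr (hgen.mono fun s hs => (hVev s hs.1 hs.2).2.2.1),
      main.2.2.2.congr (hgen.mono fun s hs => (hVev s hs.1 hs.2).2.2.2)⟩
  have b1 := block_mem (fun s a b => (hloc s a b).1) hinf.1
  have b2 := block_mem (fun s a b => (hloc s a b).2.1) hinf.2.1
  have b3 := block_mem (fun s a b => (hloc s a b).2.2.1) hinf.2.2.1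
  have b4 := block_mem (fun s a b => (hloc s a b).2.2.2) hinf.2.2.2
  refine ⟨hdetR, ?_, ?_⟩
  · rintro (i | i) (j | j)
    · exact (b1 i j).1
    · exact (b2 i j).1
    · exact (b3 i j).1
    · exact (b4 i j).1
  · rintro s hs (i | i) (j | j)
    · exact (b1 i j).2 s hs
    · exact (b2 i j).2 s hs
    · exact (b3 i j).2 s hs
    · exact (b4 i j).2 s hs

section nec
variable {m : Type*} [Fintype m] [DecidableEq m]

/-- The interconnection matrix. -/
def thet (P C : Matrix m m ℂ) : Matrix (m ⊕ m) (m ⊕ m) ℂ := fromBlocks (-P) 1 1 (-C)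

lemma thet_mulVec (P C : Matrix m m ℂ) (u v : m → ℂ) :
    thet P C *ᵥ (Sum.elim u v) = Sum.elim (-(P *ᵥ u) + v) (u - C *ᵥ v) := by
  rw [thet, fromBlocks_mulVec]
  congr 1
  · simp [neg_mulVec]
  · simp [neg_mulVec, sub_eq_add_neg]

lemma qf_thet (P C : Matrix m m ℂ) (u v : m → ℂ) :
    qf (thet P C) (Sum.elim u v) = -qf P u + (star u ⬝ᵥ v + star v ⬝ᵥ u) - qf C v := by
  have : star (Sum.elim u v) = Sum.elim (star u) (star v) := by
    ext (i | i) <;> rfl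
  rw [qf, thet_mulVec, this, sumElim_dotProduct_sumElim, dotProduct_add, dotProduct_neg,
    dotProduct_sub, qf, qf]
  ring

lemma cross_im (u v : m → ℂ) : (star u ⬝ᵥ v + star v ⬝ᵥ u).im = 0 := by
  have : star u ⬝ᵥ v = star (star v ⬝ᵥ u) := by
    rw [star_dotProduct]
  rw [this]; simp

lemma qf_thet_im (P C : Matrix m m ℂ) (u v : m → ℂ) :
    (qf (thet P C) (Sum.elim u v)).im = -(qf P u).im - (qf C v).im := by
  rw [qf_thet, Complex.sub_im, Complex.add_im, cross_im, Complex.neg_im]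
  ring

lemma qf_thet_re (P C : Matrix m m ℂ) (u v : m → ℂ) :
    (qf (thet P C) (Sum.elim u v)).re =
      -(qf P u).re + (star u ⬝ᵥ v + star v ⬝ᵥ u).re - (qf C v).re := by
  rw [qf_thet, Complex.sub_re, Complex.add_re, Complex.neg_re]

lemma sum_elim_eta (x : m ⊕ m → ℂ) : x = Sum.elim (fun i => x (Sum.inl i)) (fun i => x (Sum.inr i)) := by
  ext (i | i) <;> rfl

lemma thet_isHermitian {P C : Matrix m m ℂ} (hP : P.IsHermitian) (hC : C.IsHermitian) :
    (thet P C).IsHermitian := by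
  apply isHermitian_of_im_zero
  intro x
  rw [sum_elim_eta x, qf_thet_im, im_zero_of_isHermitian _ hP, im_zero_of_isHermitian _ hC]
  simp

lemma thet_le {P C P' C' : Matrix m m ℂ} (hP : ∀ x, (qf P' x).re ≤ (qf P x).re)
    (hC : ∀ x, (qf C' x).re ≤ (qf C x).re) (x) :
    (qf (thet P C) x).re ≤ (qf (thet P' C') x).re := by
  rw [sum_elim_eta x, qf_thet_re, qf_thet_re]
  linarith [hP fun i => x (Sum.inl i), hC fun i => x (Sum.inr i)]

lemma nonsing_of_thet {P C : Matrix m m ℂ} (h : ∀ v, thet P C *ᵥ v = 0 → v = 0) :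
    (1 - P * C).det ≠ 0 := by
  intro hd
  obtain ⟨v, hv, hv0⟩ := exists_mulVec_eq_zero_iff.2 hd
  have h1 : thet P C *ᵥ (Sum.elim (C *ᵥ v) v) = 0 := by
    rw [thet_mulVec]
    rw [sub_mulVec, one_mulVec, ← mulVec_mulVec] at hv0
    ext (i | i)
    · have := congrFun hv0 i
      simp only [Pi.sub_apply, Pi.zero_apply] at this
      simp only [Sum.elim_inl, Pi.add_apply, Pi.neg_apply, Pi.zero_apply]
      linear_combination this
    · simp
  have h2 := h _ h1
  apply hv
  ext i
  exact congrFun h2 (Sum.inr i)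

lemma NIm_phi {P C : Matrix m m ℂ} {F : Matrix (m ⊕ m) (m ⊕ m) ℂ} (hF : thet P C * F = 1)
    (hP : NIm P) (hC : NIm C) : NIm F := by
  intro w
  have hw : w = thet P C *ᵥ (F *ᵥ w) := by rw [mulVec_mulVec, hF, one_mulVec]
  have h1 : qf F w = (starRingEnd ℂ) (qf (thet P C) (F *ᵥ w)) := by
    change star w ⬝ᵥ F *ᵥ w = star (star (F *ᵥ w) ⬝ᵥ thet P C *ᵥ (F *ᵥ w))
    rw [← hw, ← star_dotProduct]
  rw [h1, Complex.conj_im, sum_elim_eta (F *ᵥ w), qf_thet_im]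
  linarith [hP fun i => (F *ᵥ w) (Sum.inl i), hC fun i => (F *ᵥ w) (Sum.inr i)]

lemma necessity_core {P C : ℂ → Matrix m m ℂ} {Pinf Cinf : Matrix m m ℂ}
    {F : ℂ → Matrix (m ⊕ m) (m ⊕ m) ℂ} {Finf : Matrix (m ⊕ m) (m ⊕ m) ℂ}
    (hP : NIF P Pinf) (hC : NIF C Cinf) (hF : NIF F Finf)
    (h0 : thet (P 0) (C 0) * F 0 = 1) (hinf : thet Pinf Cinf * Finf = 1) :
    (∀ t ∈ Set.Icc (0:ℝ) 1, (1 - (Pinf + (t : ℂ) • (P 0 - Pinf)) * Cinf).det ≠ 0) ∧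
    (∀ t ∈ Set.Icc (0:ℝ) 1, (1 - (Cinf + (t : ℂ) • (C 0 - Cinf)) * P 0).det ≠ 0) := by
  have hP0 := isHermitian_of_im_zero _ hP.zero_im
  have hC0 := isHermitian_of_im_zero _ hC.zero_im
  have hFi := isHermitian_of_im_zero _ hF.inf_im
  have gen : ∀ Pt Ct : Matrix m m ℂ, Pt.IsHermitian → Ct.IsHermitian →
      (∀ x, (qf Pinf x).re ≤ (qf Pt x).re) → (∀ x, (qf Pt x).re ≤ (qf (P 0) x).re) →
      (∀ x, (qf Cinf x).re ≤ (qf Ct x).re) → (∀ x, (qf Ct x).re ≤ (qf (C 0) x).re) →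
      (1 - Pt * Ct).det ≠ 0 := by
    intro Pt Ct hPt hCt p1 p2 c1 c2
    refine nonsing_of_thet fun v hv => ?_
    exact between_nonsing (thet (P 0) (C 0)) (F 0) (thet Pinf Cinf) Finf (thet Pt Ct)
      (thet_isHermitian hP0 hC0) hFi (thet_isHermitian hPt hCt) h0 hinf
      (thet_le p2 c2) (thet_le p1 c1) hF.inf_le v hv
  have seg : ∀ (A B : Matrix m m ℂ), (∀ x, (qf A x).im = 0) → (∀ x, (qf B x).im = 0) →
      (∀ x, (qf A x).re ≤ (qf B x).re) → ∀ t ∈ Set.Icc (0:ℝ) 1,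
      (A + (t : ℂ) • (B - A)).IsHermitian ∧
      (∀ x, (qf A x).re ≤ (qf (A + (t : ℂ) • (B - A)) x).re) ∧
      (∀ x, (qf (A + (t : ℂ) • (B - A)) x).re ≤ (qf B x).re) := by
    intro A B hA hB hAB t ht
    have e : ∀ x, (qf (A + (t : ℂ) • (B - A)) x).re =
        (qf A x).re + t * ((qf B x).re - (qf A x).re) := by
      intro x
      rw [qf_add, qf_smul, qf_sub, Complex.add_re, Complex.re_ofReal_mul, Complex.sub_re]
    refine ⟨isHermitian_of_im_zero _ fun x => ?_, fun x => ?_, fun x => ?_⟩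
    · rw [qf_add, qf_smul, qf_sub, Complex.add_im, Complex.im_ofReal_mul, Complex.sub_im, hA, hB]
      simp
    · rw [e]; nlinarith [hAB x, ht.1]
    · rw [e]; nlinarith [hAB x, ht.2]
  constructor
  · intro t ht
    obtain ⟨a, b, c⟩ := seg Pinf (P 0) hP.inf_im hP.zero_im hP.inf_le t ht
    exact gen _ _ a (isHermitian_of_im_zero _ hC.inf_im) b c (fun _ => le_rfl) hC.inf_le
  · intro t ht
    obtain ⟨a, b, c⟩ := seg Cinf (C 0) hC.inf_im hC.zero_im hC.inf_le t ht
    rw [det_sub_mul_comm]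
    exact gen _ _ hP0 a hP.inf_le (fun _ => le_rfl) b c

lemma tendsto_fromBlocks {ι : Type*} {l : Filter ι} {A B C D : ι → Matrix m m ℂ}
    {A' B' C' D' : Matrix m m ℂ} (hA : Tendsto A l (𝓝 A')) (hB : Tendsto B l (𝓝 B'))
    (hC : Tendsto C l (𝓝 C')) (hD : Tendsto D l (𝓝 D')) :
    Tendsto (fun i => fromBlocks (A i) (B i) (C i) (D i)) l (𝓝 (fromBlocks A' B' C' D')) := by
  have : Continuous fun p : (Matrix m m ℂ × Matrix m m ℂ) × (Matrix m m ℂ × Matrix m m ℂ) =>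
      fromBlocks p.1.1 p.1.2 p.2.1 p.2.2 :=
    Continuous.matrix_fromBlocks (continuous_fst.comp continuous_fst)
      (continuous_snd.comp continuous_fst) (continuous_fst.comp continuous_snd)
      (continuous_snd.comp continuous_snd)
  exact (this.tendsto ((A', B'), (C', D'))).comp ((hA.prodMk_nhds hB).prodMk_nhds
    (hC.prodMk_nhds hD))

lemma tendsto_thet {ι : Type*} {l : Filter ι} {A B : ι → Matrix m m ℂ}
    {A' B' : Matrix m m ℂ} (hA : Tendsto A l (𝓝 A')) (hB : Tendsto B l (𝓝 B')) :
    Tendsto (fun i => thet (A i) (B i)) l (𝓝 (thet A' B')) :=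
  tendsto_fromBlocks hA.neg tendsto_const_nhds tendsto_const_nhds hB.neg

lemma thet_mul_phi {P C V : Matrix m m ℂ} (hV : (1 - P * C) * V = 1) :
    thet P C * fromBlocks (C * V) (1 + C * V * P) V (V * P) = 1 := by
  have h1 : V = 1 + P * C * V := by
    rw [sub_mul, one_mul, sub_eq_iff_eq_add] at hV
    exact hV
  rw [thet, fromBlocks_multiply, ← fromBlocks_one]
  congr 1
  · rw [one_mul, neg_mul, ← mul_assoc]
    nth_rw 2 [h1]
    abel
  · rw [one_mul, neg_mul, mul_add, mul_one]
    nth_rw 2 [h1]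
    simp only [add_mul, one_mul, mul_assoc]
    abel
  · simp
  · simp [mul_assoc]

end nec

lemma necessity {P C : Matrix (Fin n) (Fin n) (RatFunc ℝ)} (hP : IsNI P) (hP0 : ¬ HasPole P 0)
    (hC : IsSNI C) {Pinf Cinf : Matrix (Fin n) (Fin n) ℂ} (hPn : NIF (evalM P) Pinf)
    (hCn : NIF (evalM C) Cinf) (hS : FeedbackStable P C) :
    (∀ t ∈ Set.Icc (0:ℝ) 1, (1 - (Pinf + (t : ℂ) • (evalM P 0 - Pinf)) * Cinf).det ≠ 0) ∧
    (∀ t ∈ Set.Icc (0:ℝ) 1,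
      (1 - (Cinf + (t : ℂ) • (evalM C 0 - Cinf)) * evalM P 0).det ≠ 0) := by
  obtain ⟨hdetR, hprop, hpole⟩ := hS
  have hVr : (1 - P * C) * (1 - P * C)⁻¹ = 1 :=
    Matrix.mul_nonsing_inv _ (isUnit_iff_ne_zero.2 hdetR)
  set V := (1 - P * C)⁻¹ with hV
  have p1 : Proper V := fun i j => hprop (Sum.inl i) (Sum.inl j)
  have p2 : Proper (V * P) := fun i j => hprop (Sum.inl i) (Sum.inr j)
  have p3 : Proper (C * V) := fun i j => hprop (Sum.inr i) (Sum.inl j)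
  have p4 : Proper (C * V * P) := fun i j => hprop (Sum.inr i) (Sum.inr j)
  have r1 : ∀ s : ℂ, 0 ≤ s.re → ¬ HasPole V s := by
    rintro s hs ⟨i, j, h⟩; exact hpole s hs (Sum.inl i) (Sum.inl j) h
  have r2 : ∀ s : ℂ, 0 ≤ s.re → ¬ HasPole (V * P) s := by
    rintro s hs ⟨i, j, h⟩; exact hpole s hs (Sum.inl i) (Sum.inr j) h
  have r3 : ∀ s : ℂ, 0 ≤ s.re → ¬ HasPole (C * V) s := by
    rintro s hs ⟨i, j, h⟩; exact hpole s hs (Sum.inr i) (Sum.inl j) h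
  have r4 : ∀ s : ℂ, 0 ≤ s.re → ¬ HasPole (C * V * P) s := by
    rintro s hs ⟨i, j, h⟩; exact hpole s hs (Sum.inr i) (Sum.inr j) h
  set F : ℂ → Matrix (Fin n ⊕ Fin n) (Fin n ⊕ Fin n) ℂ := fun s =>
    fromBlocks (evalM (C * V) s) (1 + evalM (C * V * P) s) (evalM V s) (evalM (V * P) s) with hFd
  have hev : ∀ s, ¬ HasPole P s → ¬ HasPole C s → ¬ HasPole V s →
      thet (evalM P s) (evalM C s) * F s = 1 := by
    intro s h1 h2 h3
    have a := evalM_mul h1 h2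
    have b := evalM_sub (evalM_one s).1 a.1
    have c := evalM_mul b.1 h3
    rw [hVr, (evalM_one s).2, b.2, a.2, (evalM_one s).2] at c
    have d := evalM_mul h2 h3
    have := thet_mul_phi c.2.symm
    rw [hFd]
    simp only
    rw [(evalM_mul d.1 h1).2, d.2, (evalM_mul h3 h1).2]
    exact this
  have hFcont : ∀ s : ℂ, 0 ≤ s.re → ContinuousAt F s := fun s hs =>
    tendsto_fromBlocks (continuousAt_evalM (r3 s hs)) (tendsto_const_nhds.add
      (continuousAt_evalM (r4 s hs))) (continuousAt_evalM (r1 s hs)) (continuousAt_evalM (r2 s hs))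
  have q4 : Tendsto (fun s => 1 + evalM (C * V * P) s) (Bornology.cobounded ℂ)
      (𝓝 (1 + (evalInf (C * V * P)).map Complex.ofReal)) :=
    tendsto_const_nhds.add (tendsto_evalM_inf p4)
  have hFinf := tendsto_fromBlocks (tendsto_evalM_inf p3) q4
    (tendsto_evalM_inf p1) (tendsto_evalM_inf p2)
  set Finf := fromBlocks ((evalInf (C * V)).map Complex.ofReal)
    (1 + (evalInf (C * V * P)).map Complex.ofReal) ((evalInf V).map Complex.ofReal)
    ((evalInf (V * P)).map Complex.ofReal) with hFinfd
  have hFdiff : ∀ s : ℂ, 0 ≤ s.re → ∀ i j, DifferentiableAt ℂ (fun s => F s i j) s := by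
    rintro s hs (i | i) (j | j)
    · exact differentiableAt_evalM (r3 s hs) i j
    · exact (differentiableAt_const _).add (differentiableAt_evalM (r4 s hs) i j)
    · exact differentiableAt_evalM (r1 s hs) i j
    · exact differentiableAt_evalM (r2 s hs) i j
  have hNI : ∀ ω : ℝ, 0 < ω → NIm (F (jw ω)) := by
    intro ω hω
    have hc := (hFcont (jw ω) (by rw [jw_re])).tendsto.mono_left
      (nhdsWithin_le_nhds (s := {jw ω}ᶜ))
    refine NIm.of_tendsto (hc.comp (tendsto_jw_ne ω)) ?_
    have hpos : ∀ᶠ x in 𝓝[≠] ω, 0 < x := (lt_mem_nhds hω).filter_mono nhdsWithin_le_nhds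
    filter_upwards [(tendsto_jw_ne ω).eventually (eventually_noPole P (jw ω)), hpos] with x hx hx0
    have hre : 0 ≤ (jw x).re := by rw [jw_re]
    exact NIm_phi (hev _ hx (hC.noPole hre) (r1 _ hre)) (NIm_of_niKer (hP.2.2.1 x hx0 hx))
      (NIm_of_niKer (hC.2 x hx0).posSemidef)
  have hF : NIF F Finf :=
    { diff := fun s hs => hFdiff s (le_of_lt hs)
      conj := by
        intro s
        simp only [hFd]
        rw [fromBlocks_map, evalM_conj, evalM_conj, evalM_conj, evalM_conj]
        congr 1
        ext i j
        simp [Matrix.one_apply, apply_ite]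
      zero := hFdiff 0 (by simp)
      inf := hFinf
      axis := fun ω hω => axis_of_regular (hFcont _ (by rw [jw_re])) (hNI ω hω)
      small := by
        filter_upwards [self_mem_nhdsWithin] with ω hω using hNI ω hω
      large := by
        filter_upwards [eventually_gt_atTop 0] with ω hω using hNI ω hω }
  have hz : (0:ℝ) ≤ (0:ℂ).re := by simp
  refine necessity_core hPn hCn hF (hev 0 hP0 (hC.noPole hz) (r1 0 hz)) ?_
  refine tendsto_nhds_unique ((tendsto_thet hPn.inf hCn.inf).mul hFinf) ?_
  refine tendsto_const_nhds.congr' ?_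
  filter_upwards [eventually_noPole_inf P, eventually_noPole_inf C, eventually_noPole_inf V]
    with s a b c
  exact (hev s a b c).symm

theorem feedback_stability_iff_v2 {n : ℕ} (P C : Matrix (Fin n) (Fin n) (RatFunc ℝ))
    (hP : IsNI P) (hP0 : ¬ HasPole P 0) (hC : IsSNI C) :
    FeedbackStable P C ↔
      ((1 - evalInf P * evalInf C).det ≠ 0 ∧
       maxEigLT ((evalR P 0 * evalInf C - 1) * (1 - evalInf P * evalInf C)⁻¹) 0 ∧
       maxEigLT ((evalR C 0 * evalR P 0 - 1) * (1 - evalInf C * evalR P 0)⁻¹) 0) := by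
  have hPn := hP.nif hP0
  have hCn := hC.nif
  set cx : Matrix (Fin n) (Fin n) ℝ →+* Matrix (Fin n) (Fin n) ℂ :=
    (Complex.ofRealHom).mapMatrix with hcx
  have hmap : ∀ A : Matrix (Fin n) (Fin n) ℝ, A.map Complex.ofReal = cx A := fun A => rfl
  have hdetm : ∀ A : Matrix (Fin n) (Fin n) ℝ, (cx A).det = ((A.det : ℝ) : ℂ) := fun A =>
    (RingHom.map_det Complex.ofRealHom A).symm
  have hinv : ∀ A : Matrix (Fin n) (Fin n) ℝ, A.det ≠ 0 → cx A⁻¹ = (cx A)⁻¹ := by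
    intro A hA
    refine (Matrix.inv_eq_right_inv ?_).symm
    rw [← map_mul, Matrix.mul_nonsing_inv _ (isUnit_iff_ne_zero.2 hA), map_one]
  rw [hmap] at hPn hCn
  have hPz : evalM P 0 = cx (evalR P 0) := evalM_zero_eq P
  have hCz : evalM C 0 = cx (evalR C 0) := evalM_zero_eq C
  have hPi := isHermitian_of_im_zero _ hPn.inf_im
  have hCi := isHermitian_of_im_zero _ hCn.inf_im
  have hPh := isHermitian_of_im_zero _ hPn.zero_im
  have key1 : (1 - evalInf P * evalInf C).det ≠ 0 →
      (maxEigLT ((evalR P 0 * evalInf C - 1) * (1 - evalInf P * evalInf C)⁻¹) 0 ↔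
      ∀ t ∈ Set.Icc (0:ℝ) 1, (1 - (cx (evalInf P) + (t : ℂ) • (evalM P 0 - cx (evalInf P))) *
        cx (evalInf C)).det ≠ 0) := by
    intro h
    have hN : (1 - cx (evalInf P) * cx (evalInf C)).det ≠ 0 := by
      have : (cx (1 - evalInf P * evalInf C)).det ≠ 0 := by
        rw [hdetm]; exact_mod_cast h
      rwa [map_sub, map_mul, map_one] at this
    rw [← eig_iff (evalM P 0) (cx (evalInf P)) (cx (evalInf C)) hPi hCi hPn.sub_posSemidef hN]
    unfold maxEigLT eigsRealAndLT
    rw [hmap, map_mul, hinv _ h]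
    simp only [map_sub, map_mul, map_one, hPz]
  have key2 : (1 - evalInf C * evalR P 0).det ≠ 0 →
      (maxEigLT ((evalR C 0 * evalR P 0 - 1) * (1 - evalInf C * evalR P 0)⁻¹) 0 ↔
      ∀ t ∈ Set.Icc (0:ℝ) 1, (1 - (cx (evalInf C) + (t : ℂ) • (evalM C 0 - cx (evalInf C))) *
        evalM P 0).det ≠ 0) := by
    intro h
    have hN : (1 - cx (evalInf C) * evalM P 0).det ≠ 0 := by
      have : (cx (1 - evalInf C * evalR P 0)).det ≠ 0 := by
        rw [hdetm]; exact_mod_cast h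
      rwa [map_sub, map_mul, map_one, ← hPz] at this
    rw [← eig_iff (evalM C 0) (cx (evalInf C)) (evalM P 0) hCi hPh hCn.sub_posSemidef hN]
    unfold maxEigLT eigsRealAndLT
    rw [hmap, map_mul, hinv _ h]
    simp only [map_sub, map_mul, map_one, hPz, hCz]
  have hone : (∀ t ∈ Set.Icc (0:ℝ) 1, (1 - (cx (evalInf P) +
      (t : ℂ) • (evalM P 0 - cx (evalInf P))) * cx (evalInf C)).det ≠ 0) →
      (1 - evalInf C * evalR P 0).det ≠ 0 := by
    intro h h0
    apply h 1 (by simp)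
    have : (cx (1 - evalInf C * evalR P 0)).det = 0 := by rw [hdetm, h0]; simp
    rw [map_sub, map_mul, map_one, ← hPz, det_sub_mul_comm] at this
    simpa using this
  have hzero : (∀ t ∈ Set.Icc (0:ℝ) 1, (1 - (cx (evalInf P) +
      (t : ℂ) • (evalM P 0 - cx (evalInf P))) * cx (evalInf C)).det ≠ 0) →
      (1 - evalInf P * evalInf C).det ≠ 0 := by
    intro h h0
    apply h 0 (by simp)
    have : (cx (1 - evalInf P * evalInf C)).det = 0 := by rw [hdetm, h0]; simp
    rw [map_sub, map_mul, map_one] at this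
    simpa using this
  constructor
  · intro hS
    obtain ⟨hb, hc⟩ := necessity hP hP0 hC hPn hCn hS
    exact ⟨hzero hb, (key1 (hzero hb)).2 hb, (key2 (hone hb)).2 hc⟩
  · rintro ⟨ha, hb, hc⟩
    have hb' := (key1 ha).1 hb
    exact sufficiency hP hP0 hC hPn hCn hb' ((key2 (hone hb')).1 hc)

end NIControl
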